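/- arXiv:1207.0091 — 2 statements merged into one kernel-verified Lean document; each statement's English description precedes it below -/
import Mathlib

section
/- Let β ∈ (1,2] with 1_β = a_1a_2⋯a_n0^∞, a_n = 1 (so X_β is SFT), and let {i_1 = 1 < i_2 < ⋯ < i_t} = {i ≤ n : a_i = 1}. Then the zeta function of X_β satisfies ζ_{σ_β}(t) = 1/(1 − t^{i_1} − t^{i_2} − ⋯ − t^{i_t}) as formal power series, and ζ_{σ_β} = ζ_{σ_S} where X(S) = ASS(X_β). -/
/-! ## Basic symbolic dynamics over `ℤ` -/

/-- The shift map on bi-infinite sequences. -/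
def shiftMap {A : Type} (x : ℤ → A) : ℤ → A := fun i => x (i + 1)

/-- The word `w` occurs in `x` starting at coordinate `i`. -/
def occursAt {A : Type} (w : List A) (x : ℤ → A) (i : ℤ) : Prop :=
  ∀ (k : ℕ) (h : k < w.length), x (i + k) = w.get ⟨k, h⟩

/-- The word `w` occurs somewhere in `x`. -/
def occursIn {A : Type} (w : List A) (x : ℤ → A) : Prop := ∃ i : ℤ, occursAt w x i

/-- The word `w` belongs to the language of `X`. -/
def InLang {A : Type} (X : Set (ℤ → A)) (w : List A) : Prop := ∃ x ∈ X, occursIn w x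

/-- `X` is a subshift: it is defined by a set of forbidden words. -/
def IsSubshift {A : Type} (X : Set (ℤ → A)) : Prop :=
  ∃ F : Set (List A), X = { x | ∀ w ∈ F, ¬ occursIn w x }

/-- `X` is a shift of finite type: defined by a finite set of forbidden words. -/
def IsSFT {A : Type} (X : Set (ℤ → A)) : Prop :=
  ∃ F : Finset (List A), X = { x | ∀ w ∈ F, ¬ occursIn w x }

/-- `φ` is a sliding block code on `X` (with some memory `m` and anticipation `n`). -/
def IsSliding {A B : Type} (X : Set (ℤ → A)) (φ : (ℤ → A) → ℤ → B) : Prop :=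
  ∃ m n : ℕ, ∀ x ∈ X, ∀ y ∈ X, ∀ i : ℤ,
    (∀ j : ℤ, i - (m : ℤ) ≤ j → j ≤ i + (n : ℤ) → x j = y j) → φ x i = φ y i

/-- `φ` is a factor code from `X` onto `Y`. -/
def IsFactorCode {A B : Type} (X : Set (ℤ → A)) (Y : Set (ℤ → B))
    (φ : (ℤ → A) → ℤ → B) : Prop :=
  IsSliding X φ ∧ (∀ x ∈ X, φ x ∈ Y) ∧ (∀ y ∈ Y, ∃ x ∈ X, φ x = y) ∧
    (∀ x ∈ X, φ (shiftMap x) = shiftMap (φ x))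

/-- `X` and `Y` are topologically conjugate (via mutually inverse sliding block codes). -/
def TopConjugate {A B : Type} (X : Set (ℤ → A)) (Y : Set (ℤ → B)) : Prop :=
  ∃ (φ : (ℤ → A) → ℤ → B) (ψ : (ℤ → B) → ℤ → A),
    IsFactorCode X Y φ ∧ IsFactorCode Y X ψ ∧
    (∀ x ∈ X, ψ (φ x) = x) ∧ (∀ y ∈ Y, φ (ψ y) = y)

/-- `φ` is a right-resolving (1-block) code on `X`: it is induced by a symbol map `Φ`
such that whenever `ab` and `ac` are 2-blocks of `X` with `Φ b = Φ c`, then `b = c`. -/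
def IsRightResolvingCode {A B : Type} (X : Set (ℤ → A)) (φ : (ℤ → A) → ℤ → B) : Prop :=
  ∃ Φ : A → B, (∀ x ∈ X, ∀ i : ℤ, φ x i = Φ (x i)) ∧
    ∀ a b c : A, InLang X [a, b] → InLang X [a, c] → Φ b = Φ c → b = c

/-- `x` is a doubly transitive point of `X`. -/
def DoublyTransitive {A : Type} (X : Set (ℤ → A)) (x : ℤ → A) : Prop :=
  ∀ w : List A, InLang X w →
    (∀ N : ℤ, ∃ i ≥ N, occursAt w x i) ∧ (∀ N : ℤ, ∃ i ≤ N, occursAt w x i)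

/-- `φ : W → Y` is one-to-one almost everywhere: every doubly transitive point of `Y`
has exactly one preimage in `W`. -/
def OneOneAE {A B : Type} (W : Set (ℤ → A)) (Y : Set (ℤ → B))
    (φ : (ℤ → A) → ℤ → B) : Prop :=
  ∀ y ∈ Y, DoublyTransitive Y y → ∃! x, x ∈ W ∧ φ x = y

/-- `φ` is finite-to-one on `W` (uniformly bounded fibers). -/
def FiniteToOne {A B : Type} (W : Set (ℤ → A)) (φ : (ℤ → A) → ℤ → B) : Prop :=
  ∃ M : ℕ, ∀ y : ℤ → B, { x ∈ W | φ x = y }.Finite ∧ { x ∈ W | φ x = y }.ncard ≤ M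

/-- `X` and `Y` are right-resolving almost conjugate. -/
def RRAlmostConjugate {A B : Type} (X : Set (ℤ → A)) (Y : Set (ℤ → B)) : Prop :=
  ∃ (C : Type) (_ : Finite C) (W : Set (ℤ → C))
    (φX : (ℤ → C) → ℤ → A) (φY : (ℤ → C) → ℤ → B),
    IsSFT W ∧ IsFactorCode W X φX ∧ IsFactorCode W Y φY ∧
    IsRightResolvingCode W φX ∧ IsRightResolvingCode W φY ∧
    OneOneAE W X φX ∧ OneOneAE W Y φY

/-- `X` and `Y` are right-resolving finitely equivalent. -/
def RRFinEquiv {A B : Type} (X : Set (ℤ → A)) (Y : Set (ℤ → B)) : Prop :=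
  ∃ (C : Type) (_ : Finite C) (W : Set (ℤ → C))
    (φX : (ℤ → C) → ℤ → A) (φY : (ℤ → C) → ℤ → B),
    IsSFT W ∧ IsFactorCode W X φX ∧ IsFactorCode W Y φY ∧
    IsRightResolvingCode W φX ∧ IsRightResolvingCode W φY ∧
    FiniteToOne W φX ∧ FiniteToOne W φY

/-- An irreducible shift space. -/
def IrreducibleShift {A : Type} (X : Set (ℤ → A)) : Prop :=
  ∀ u w : List A, InLang X u → InLang X w → ∃ v : List A, InLang X (u ++ v ++ w)

/-- `v` is a synchronizing word for `X`. -/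
def SynchronizingWord {A : Type} (X : Set (ℤ → A)) (v : List A) : Prop :=
  InLang X v ∧ ∀ u w : List A, InLang X (u ++ v) → InLang X (v ++ w) →
    InLang X (u ++ v ++ w)

/-- A synchronized system: an irreducible subshift with a synchronizing word. -/
def Synchronized {A : Type} (X : Set (ℤ → A)) : Prop :=
  IsSubshift X ∧ IrreducibleShift X ∧ ∃ v : List A, SynchronizingWord X v

/-! ## S-gap shifts and β-shifts -/

/-- The S-gap shift `X(S)` for `S ⊆ ℕ ∪ {0}`: numbers of `0`s between successive `1`s
lie in `S`; `1`s occur infinitely often in both directions unless `S` is infinite. -/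
def SGap (S : Set ℕ) : Set (ℤ → Fin 2) :=
  { x | (∀ i j : ℤ, i < j → x i = 1 → x j = 1 →
          (∀ k : ℤ, i < k → k < j → x k = 0) → (j - i - 1).toNat ∈ S) ∧
        (S.Finite → (∀ N : ℤ, ∃ i ≥ N, x i = 1) ∧ (∀ N : ℤ, ∃ i ≤ N, x i = 1)) }

/-- Remainders of the (greedy) β-expansion of `1` with digits in `{0,1}`:
`betaRem β n = 1 - Σ_{i ≤ n} a_i β^{-i}`. -/
noncomputable def betaRem (β : ℝ) : ℕ → ℝ
  | 0 => 1
  | n + 1 => betaRem β n - (if β⁻¹ ^ (n + 1) ≤ betaRem β n then β⁻¹ ^ (n + 1) else 0)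

/-- The digit `a_{n+1}` of the β-expansion `1_β = a_1 a_2 a_3 ⋯` of `1`. -/
noncomputable def betaDigit (β : ℝ) (n : ℕ) : Fin 2 :=
  if β⁻¹ ^ (n + 1) ≤ betaRem β n then 1 else 0

/-- Lexicographic order on one-sided sequences. -/
def lexLE {A : Type} [LinearOrder A] (u v : ℕ → A) : Prop :=
  u = v ∨ ∃ n : ℕ, (∀ k < n, u k = v k) ∧ u n < v n

/-- The β-shift: `x ∈ X_β` iff every right tail of `x` is lexicographically `≤ 1_β`. -/
def betaShift (β : ℝ) : Set (ℤ → Fin 2) :=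
  { x | ∀ i : ℤ, lexLE (fun n : ℕ => x (i + (n : ℤ))) (betaDigit β) }

/-- The set `S = {i - 1 : a_i = 1}` of the associated S-gap shift `ASS(X_β) = X(S)`. -/
def assocS (β : ℝ) : Set ℕ := { n | betaDigit β n = 1 }

/-- Eventual periodicity of a sequence. -/
def EvPeriodic {α : Type} (a : ℕ → α) : Prop :=
  ∃ p : ℕ, 0 < p ∧ ∃ N : ℕ, ∀ n ≥ N, a (n + p) = a n

/-! ## Finite directed multigraphs, edge shifts, labeled graphs -/

structure FinGraph where
  V : Type
  E : Type
  [fintypeV : Fintype V]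
  [fintypeE : Fintype E]
  src : E → V
  tgt : E → V

attribute [instance] FinGraph.fintypeV FinGraph.fintypeE

/-- The edge shift of a graph. -/
def FinGraph.edgeShift (G : FinGraph) : Set (ℤ → G.E) :=
  { ξ | ∀ i : ℤ, G.tgt (ξ i) = G.src (ξ (i + 1)) }

structure GraphHom (G H : FinGraph) where
  vmap : G.V → H.V
  emap : G.E → H.E
  src_eq : ∀ e : G.E, H.src (emap e) = vmap (G.src e)
  tgt_eq : ∀ e : G.E, H.tgt (emap e) = vmap (G.tgt e)

structure GraphIso (G H : FinGraph) where
  vmap : G.V ≃ H.V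
  emap : G.E ≃ H.E
  src_eq : ∀ e : G.E, H.src (emap e) = vmap (G.src e)
  tgt_eq : ∀ e : G.E, H.tgt (emap e) = vmap (G.tgt e)

/-- `H ⪯ G` : the edge shift `X_H` is a right-resolving factor of `X_G`,
via a graph homomorphism whose restriction to each out-edge set is injective. -/
def RRFactorOf (H G : FinGraph) : Prop :=
  ∃ Φ : GraphHom G H,
    (∀ η ∈ H.edgeShift, ∃ ξ ∈ G.edgeShift, ∀ i : ℤ, Φ.emap (ξ i) = η i) ∧
    ∀ I : G.V, Set.InjOn Φ.emap { e : G.E | G.src e = I }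

/-- `M` is the minimal right-resolving factor graph `M_G` of `G`: it is the smallest
element in the order `⪯` on graphs right-resolving-factoring from `G`. -/
def IsMinFactorGraph (M G : FinGraph) : Prop :=
  RRFactorOf M G ∧ ∀ H : FinGraph, RRFactorOf H G → RRFactorOf M H

/-- The nested sequence of equivalence relations `∼ₙ` on vertices of `G` whose limiting
partition gives the states of `M_G`. -/
def simRel (G : FinGraph) : ℕ → G.V → G.V → Prop
  | 0, _, _ => True
  | n + 1, I, J => ∀ K : G.V,
      { e : G.E | G.src e = I ∧ simRel G n (G.tgt e) K }.ncard =
      { e : G.E | G.src e = J ∧ simRel G n (G.tgt e) K }.ncard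

/-- The limiting equivalence relation; its classes are the states of `M_G`. -/
def simLim (G : FinGraph) (I J : G.V) : Prop := ∀ n : ℕ, simRel G n I J

/-- A labeled graph over the alphabet `A`. -/
structure LGraph (A : Type) where
  G : FinGraph
  label : G.E → A

def LGraph.RightResolving {A : Type} (𝒢 : LGraph A) : Prop :=
  ∀ e f : 𝒢.G.E, 𝒢.G.src e = 𝒢.G.src f → 𝒢.label e = 𝒢.label f → e = f

/-- `𝒢` presents the shift space `X`: `X = ℒ_∞(X_G)`. -/
def LGraph.Presents {A : Type} (𝒢 : LGraph A) (X : Set (ℤ → A)) : Prop :=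
  X = { x | ∃ ξ ∈ 𝒢.G.edgeShift, ∀ i : ℤ, 𝒢.label (ξ i) = x i }

def FinGraph.Irreducible (G : FinGraph) : Prop :=
  ∀ I J : G.V, Relation.ReflTransGen (fun u v => ∃ e : G.E, G.src e = u ∧ G.tgt e = v) I J

/-- A sofic shift: one presented by a finite labeled graph. -/
def IsSofic {A : Type} (X : Set (ℤ → A)) : Prop := ∃ 𝒢 : LGraph A, 𝒢.Presents X

/-- The Fischer cover: the minimal right-resolving presentation of an irreducible
sofic shift. -/
def IsFischerCover {A : Type} (𝒢 : LGraph A) (X : Set (ℤ → A)) : Prop :=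
  𝒢.G.Irreducible ∧ 𝒢.RightResolving ∧ 𝒢.Presents X ∧
    ∀ ℋ : LGraph A, ℋ.RightResolving → ℋ.Presents X →
      Fintype.card 𝒢.G.V ≤ Fintype.card ℋ.G.V

/-! ## Countable labeled graphs (for almost Markov systems) -/

structure CtblLGraph (A : Type) where
  V : Type
  E : Type
  ctblV : Countable V
  ctblE : Countable E
  src : E → V
  tgt : E → V
  label : E → A

def CtblLGraph.RightResolving {A : Type} (𝒢 : CtblLGraph A) : Prop :=
  ∀ e f : 𝒢.E, 𝒢.src e = 𝒢.src f → 𝒢.label e = 𝒢.label f → e = f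

def CtblLGraph.Irreducible {A : Type} (𝒢 : CtblLGraph A) : Prop :=
  ∀ I J : 𝒢.V, Relation.ReflTransGen (fun u v => ∃ e : 𝒢.E, 𝒢.src e = u ∧ 𝒢.tgt e = v) I J

/-- `w` is the label of some finite path in `𝒢`. -/
def CtblLGraph.IsPathLabel {A : Type} (𝒢 : CtblLGraph A) (w : List A) : Prop :=
  ∃ es : List 𝒢.E, es.map 𝒢.label = w ∧ es.Chain' (fun e f => 𝒢.tgt e = 𝒢.src f)

/-- `𝒢` presents `X` (on the level of languages). -/
def CtblLGraph.PresentsLang {A : Type} (𝒢 : CtblLGraph A) (X : Set (ℤ → A)) : Prop :=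
  ∀ w : List A, InLang X w ↔ 𝒢.IsPathLabel w

/-- An almost Markov system: it has a right-resolving presentation by a countable
irreducible labeled graph. -/
def AlmostMarkov {A : Type} (X : Set (ℤ → A)) : Prop :=
  ∃ 𝒢 : CtblLGraph A, 𝒢.RightResolving ∧ 𝒢.Irreducible ∧ 𝒢.PresentsLang X

/-! ## Words `𝒟(S)`, primitivity -/

/-- The word `𝒟(S) = d_1 d_2 ⋯ d_{k-2} (d_{k-1} + s_0 + 1)` for `S = {s_0 < ⋯ < s_{k-1}}`
enumerated by `s`. -/
def DSword (k : ℕ) (s : ℕ → ℕ) : List ℕ :=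
  (List.range (k - 1)).map fun i =>
    if i + 2 < k then s (i + 1) - s i else s (i + 1) - s i + s 0 + 1

/-- The word `𝒟(S)` of a finite set `S = {s_0 < s_1 < ⋯ < s_{k-1}}` of naturals. -/
def gapWord (F : Finset ℕ) : List ℕ :=
  let l := F.sort (· ≤ ·)
  (List.range (l.length - 1)).map fun i =>
    if i + 2 < l.length then l.getD (i + 1) 0 - l.getD i 0
    else l.getD (i + 1) 0 - l.getD i 0 + l.getD 0 0 + 1

/-- `q` is a period of the word `w` (in the sense `w = u^{|w|/q}` with `|u| = q`). -/
def ListPeriod (w : List ℕ) (q : ℕ) : Prop :=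
  0 < q ∧ q ∣ w.length ∧ ∀ i : ℕ, i + q < w.length → w.getD i 0 = w.getD (i + q) 0

/-- A word is primitive if its least period equals its length. -/
def ListPrimitive (w : List ℕ) : Prop := ∀ q : ℕ, ListPeriod w q → q = w.length

/-! ## Entropy, periodic points and zeta functions -/

/-- The number of words of length `n` in the language of `X`. -/
noncomputable def wordCount {A : Type} (X : Set (ℤ → A)) (n : ℕ) : ℕ :=
  { w : List A | w.length = n ∧ InLang X w }.ncard

/-- `X` has topological entropy `h`, i.e. `(1/n) log |ℬ_n(X)| → h`. -/
def HasEntropy {A : Type} (X : Set (ℤ → A)) (h : ℝ) : Prop :=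
  Filter.Tendsto (fun n : ℕ => Real.log (wordCount X n) / n) Filter.atTop (nhds h)

/-- The topological entropy of `X`. -/
noncomputable def entropy {A : Type} (X : Set (ℤ → A)) : ℝ :=
  Filter.atTop.limsup fun n : ℕ => Real.log (wordCount X n) / n

/-- The set of points of `X` of period `n`. -/
def perPts {A : Type} (X : Set (ℤ → A)) (n : ℕ) : Set (ℤ → A) :=
  { x ∈ X | shiftMap^[n] x = x }

/-- `p_n`, the number of points of period `n`. -/
noncomputable def pcount {A : Type} (X : Set (ℤ → A)) (n : ℕ) : ℕ := (perPts X n).ncard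

/-- The exponential of a formal power series (intended for zero constant term). -/
noncomputable def expPS (g : PowerSeries ℚ) : PowerSeries ℚ :=
  PowerSeries.mk fun n =>
    ∑ k ∈ Finset.range (n + 1), (PowerSeries.coeff n (g ^ k)) / (Nat.factorial k : ℚ)

/-- The Artin–Mazur zeta function `ζ_σ(t) = exp (Σ_{n ≥ 1} (p_n / n) tⁿ)` of `X`. -/
noncomputable def zetaPS {A : Type} (X : Set (ℤ → A)) : PowerSeries ℚ :=
  expPS (PowerSeries.mk fun n => if n = 0 then 0 else (pcount X n : ℚ) / (n : ℚ))

/-! ## Continued fractions parametrization of S-gap shifts -/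

/-- The value of a finite continued fraction `[a_0; a_1, …, a_n]`. -/
def cfVal : List ℕ → ℚ
  | [] => 0
  | [a] => (a : ℚ)
  | a :: rest => (a : ℚ) + 1 / cfVal rest

/-- The sequence `d_0 = s_0`, `d_n = s_n - s_{n-1}` of gap differences of `S`. -/
noncomputable def dSeq (S : Set ℕ) (n : ℕ) : ℕ :=
  if n = 0 then Nat.nth (· ∈ S) 0 else Nat.nth (· ∈ S) n - Nat.nth (· ∈ S) (n - 1)

open scoped Classical in
/-- The real number `x_S = [d_0; d_1, d_2, …]` assigned to the S-gap shift `X(S)`. -/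
noncomputable def xOf (S : Set ℕ) : ℝ :=
  if hS : S.Finite then ((cfVal ((List.range hS.toFinset.card).map (dSeq S)) : ℚ) : ℝ)
  else Filter.atTop.limsup fun n : ℕ =>
    ((cfVal ((List.range (n + 1)).map (dSeq S)) : ℚ) : ℝ)

namespace ZB

/-! ### Power series part -/
open PowerSeries in
lemma expPS_deriv (g : PowerSeries ℚ) (hg : constantCoeff g = 0) :
    derivative ℚ (expPS g) = derivative ℚ g * expPS g := by
  have hz : ∀ i k : ℕ, i < k → coeff i (g ^ k) = 0 := by
    intro i k hik
    apply coeff_of_lt_order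
    have h2 := le_order_pow_of_constantCoeff_eq_zero k hg
    exact lt_of_lt_of_le (by exact_mod_cast hik) h2
  ext n
  rw [coeff_derivative, coeff_mul, expPS, coeff_mk]
  have h1 : ∀ p ∈ Finset.HasAntidiagonal.antidiagonal n,
      coeff p.1 (derivative ℚ g) * coeff p.2 (PowerSeries.mk fun n =>
        ∑ k ∈ Finset.range (n + 1), (coeff n (g ^ k)) / (Nat.factorial k : ℚ)) =
      ∑ k ∈ Finset.range (n + 1),
        coeff p.1 (derivative ℚ g) * coeff p.2 (g ^ k) / (Nat.factorial k : ℚ) := by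
    intro p hp
    rw [coeff_mk, Finset.mul_sum]
    have hp' : p.2 ≤ n := by
      have := Finset.HasAntidiagonal.mem_antidiagonal.1 hp
      omega
    rw [← Finset.sum_subset (Finset.range_mono (by omega : p.2 + 1 ≤ n + 1))]
    · apply Finset.sum_congr rfl
      intro k _
      ring
    · intro k _ hk
      rw [hz _ _ (by simp at hk; omega)]
      simp
  rw [Finset.sum_congr rfl h1, Finset.sum_comm, Finset.sum_range_succ', add_mul]
  have h0 : (coeff (n + 1) (g ^ 0) / (Nat.factorial 0 : ℚ)) * ((n : ℚ) + 1) = 0 := by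
    simp [coeff_one]
  rw [h0, add_zero, Finset.sum_mul]
  apply Finset.sum_congr rfl
  intro k _
  rw [← Finset.sum_div, ← coeff_mul]
  have h2 := congrArg (coeff n) ((derivative ℚ).leibniz_pow g (k + 1))
  rw [coeff_derivative] at h2
  have h3 : (k + 1) • g ^ (k + 1 - 1) • derivative ℚ g = 
      ((k + 1 : ℕ) : ℚ) • (derivative ℚ g * g ^ k) := by
    rw [Nat.cast_smul_eq_nsmul]
    simp [mul_comm]
  rw [h3, map_smul, smul_eq_mul] at h2
  rw [Nat.factorial_succ]
  have h4 : ((k + 1 : ℕ) : ℚ) ≠ 0 := by positivity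
  have h5 : ((Nat.factorial k : ℕ) : ℚ) ≠ 0 := by positivity
  push_cast at *
  field_simp
  linarith

open PowerSeries in
lemma zeta_alg (p : ℕ → ℕ) (c s : ℕ → ℚ) (P : PowerSeries ℚ)
    (hP0 : constantCoeff P = 0) (hP : ∀ n, coeff (n + 1) P = s n)
    (hc0 : c 0 = 1)
    (hc : ∀ k, c (k + 1) = ∑ m ∈ Finset.range (k + 1), s m * c (k - m))
    (hp : ∀ n, (p (n + 1) : ℚ) = ∑ m ∈ Finset.range (n + 1), (m + 1) * s m * c (n - m)) :
    expPS (PowerSeries.mk fun n => if n = 0 then 0 else (p n : ℚ) / (n : ℚ)) * (1 - P) = 1 := by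
  set g : PowerSeries ℚ := PowerSeries.mk fun n => if n = 0 then 0 else (p n : ℚ) / (n : ℚ) with hgdef
  have hg0 : constantCoeff g = 0 := by
    rw [← coeff_zero_eq_constantCoeff_apply, hgdef, coeff_mk]; simp
  have hPX : P = X * PowerSeries.mk s := by
    ext n
    cases n with
    | zero => simpa using hP0
    | succ n => rw [hP, coeff_succ_X_mul, coeff_mk]
  have hC : PowerSeries.mk c * (1 - P) = 1 := by
    have : PowerSeries.mk c = 1 + P * PowerSeries.mk c := by
      ext n
      cases n with
      | zero => simp [hc0, hP0]
      | succ n =>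
        rw [hPX, mul_assoc, map_add, coeff_succ_X_mul, coeff_mul, coeff_mk, hc,
          Finset.Nat.sum_antidiagonal_eq_sum_range_succ
            (fun i j => coeff i (PowerSeries.mk s) * coeff j (PowerSeries.mk c))]
        simp [coeff_one]
    linear_combination this
  have hg : derivative ℚ g = derivative ℚ P * PowerSeries.mk c := by
    ext n
    rw [coeff_derivative, hgdef, coeff_mk, coeff_mul,
      Finset.Nat.sum_antidiagonal_eq_sum_range_succ
            (fun i j => coeff i (derivative ℚ P) * coeff j (PowerSeries.mk c))]
    rw [if_neg (by omega)]
    have : ((n + 1 : ℕ) : ℚ) ≠ 0 := by positivity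
    push_cast at *
    rw [div_mul_cancel₀ _ this, hp]
    apply Finset.sum_congr rfl
    intro m _
    rw [coeff_derivative, hP, coeff_mk]
    ring
  apply derivative.ext (R := ℚ)
  · have h1 : derivative ℚ (1 - P) = - derivative ℚ P := by simp
    rw [Derivation.leibniz, expPS_deriv g hg0, hg, h1, smul_eq_mul, smul_eq_mul]
    rw [derivative_one]
    linear_combination derivative ℚ P * expPS g * hC
  · rw [map_mul, map_sub, hP0, ← coeff_zero_eq_constantCoeff_apply, expPS, coeff_mk]
    simp

/-! ### Consecutive ones -/

lemma fin2_zero {z : Fin 2} (h : z ≠ 1) : z = 0 := by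
  revert h; revert z; decide

lemma fin2_ne {z : Fin 2} (h : z = 0) : z ≠ 1 := by
  revert h; revert z; decide

/-- `c < d` are positions of successive `1`s of `y`. -/
def Cons (y : ℤ → Fin 2) (c d : ℤ) : Prop :=
  c < d ∧ y c = 1 ∧ y d = 1 ∧ ∀ k : ℤ, c < k → k < d → y k = 0

lemma Cons.le_of_one {y : ℤ → Fin 2} {c d e : ℤ} (h : Cons y c d) (he : y e = 1) (hce : c < e) :
    d ≤ e := by
  by_contra hlt
  exact fin2_ne (h.2.2.2 e hce (by omega)) he

lemma Cons.ge_of_one {y : ℤ → Fin 2} {c d e : ℤ} (h : Cons y c d) (he : y e = 1) (hed : e < d) :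
    e ≤ c := by
  by_contra hlt
  exact fin2_ne (h.2.2.2 e (by omega) hed) he

lemma Cons.unique {y : ℤ → Fin 2} {c d c' d' j : ℤ} (h : Cons y c d) (h' : Cons y c' d')
    (h1 : c ≤ j) (h2 : j < d) (h1' : c' ≤ j) (h2' : j < d') : c = c' ∧ d = d' := by
  have a1 := h.ge_of_one h'.2.1 (by omega)
  have a2 := h'.ge_of_one h.2.1 (by omega)
  have a3 := h.le_of_one h'.2.2.1 (by omega)
  have a4 := h'.le_of_one h.2.2.1 (by omega)
  omega

lemma exists_next {y : ℤ → Fin 2} {c e : ℤ} (hc : y c = 1) (he : y e = 1) (hce : c < e) :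
    ∃ d, d ≤ e ∧ Cons y c d := by
  classical
  have hex : ∃ n : ℕ, y (c + 1 + n) = 1 := by
    refine ⟨(e - c - 1).toNat, ?_⟩
    have : c + 1 + ((e - c - 1).toNat : ℤ) = e := by omega
    rw [this]; exact he
  have hz : ∀ k : ℤ, c < k → k < c + 1 + (Nat.find hex : ℤ) → y k = 0 := by
    intro k h1 h2
    apply fin2_zero
    intro hk
    apply Nat.find_min hex (m := (k - c - 1).toNat) (by omega)
    have : c + 1 + ((k - c - 1).toNat : ℤ) = k := by omega
    rw [this]; exact hk
  refine ⟨c + 1 + (Nat.find hex : ℤ), ?_, by omega, hc, Nat.find_spec hex, hz⟩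
  by_contra hlt
  exact fin2_ne (hz e hce (by omega)) he

lemma exists_last {y : ℤ → Fin 2} {e j : ℤ} (he : y e = 1) (hej : e ≤ j) :
    ∃ c, c ≤ j ∧ y c = 1 ∧ ∀ k, c < k → k ≤ j → y k = 0 := by
  classical
  have hex : ∃ n : ℕ, y (j - n) = 1 := by
    refine ⟨(j - e).toNat, ?_⟩
    have : j - ((j - e).toNat : ℤ) = e := by omega
    rw [this]; exact he
  refine ⟨j - (Nat.find hex : ℤ), by omega, Nat.find_spec hex, ?_⟩
  intro k h1 h2
  apply fin2_zero
  intro hk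
  apply Nat.find_min hex (m := (j - k).toNat) (by omega)
  have : j - ((j - k).toNat : ℤ) = k := by omega
  rw [this]; exact hk

lemma exists_cons {y : ℤ → Fin 2} (j : ℤ) (h1 : ∃ i > j, y i = 1) (h2 : ∃ i ≤ j, y i = 1) :
    ∃ c d, Cons y c d ∧ c ≤ j ∧ j < d := by
  obtain ⟨e, hej, he⟩ := h2
  obtain ⟨e', hej', he'⟩ := h1
  obtain ⟨c, hc, hc1, hcz⟩ := exists_last he hej
  obtain ⟨d, hd, hcd⟩ := exists_next hc1 he' (by omega)
  refine ⟨c, d, hcd, hc, ?_⟩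
  by_contra hlt
  exact fin2_ne (hcz d hcd.1 (by omega)) hcd.2.2.1

lemma SGap_cons {S : Set ℕ} (hS : S.Finite) {y : ℤ → Fin 2} (hy : y ∈ SGap S) (j : ℤ) :
    ∃ c d, Cons y c d ∧ c ≤ j ∧ j < d := by
  obtain ⟨h1, h2⟩ := hy.2 hS
  obtain ⟨i, hi, hi'⟩ := h1 (j + 1)
  exact exists_cons j ⟨i, by omega, hi'⟩ (h2 j)

lemma SGap_gap {S : Set ℕ} {y : ℤ → Fin 2} (hy : y ∈ SGap S) {c d : ℤ} (h : Cons y c d) :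
    (d - c - 1).toNat ∈ S := hy.1 c d h.1 h.2.1 h.2.2.1 h.2.2.2

lemma iter_shift {A : Type} (x : ℤ → A) (n : ℕ) : shiftMap^[n] x = fun i => x (i + n) := by
  induction n with
  | zero => simp
  | succ n ih =>
    rw [Function.iterate_succ_apply', ih]
    funext i
    simp only [shiftMap]
    congr 1
    push_cast
    ring

lemma per_nat {A : Type} {x : ℤ → A} {n : ℕ} (h : shiftMap^[n] x = x) (i : ℤ) (q : ℕ) :
    x (i + n * q) = x i := by
  induction q with
  | zero => simp
  | succ q ih =>
    have := congrFun h (i + n * q)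
    rw [iter_shift] at this
    rw [← ih, ← this]
    congr 1
    push_cast
    ring

lemma per_int {A : Type} {x : ℤ → A} {n : ℕ} (h : shiftMap^[n] x = x) (i : ℤ) (q : ℤ) :
    x (i + n * q) = x i := by
  obtain ⟨k, rfl | rfl⟩ := q.eq_nat_or_neg
  · exact per_nat h i k
  · rw [← per_nat h (i + n * (-(k : ℤ))) k]
    congr 1
    ring

/-! ### The conjugacy between the (strict) beta shift and the S-gap shift -/

section Conj
variable (a : ℕ → Fin 2)

/-- The block `a_1 ⋯ a_m 0` (with `a_{m+1} = 1`) occurs in `x` at `i`. -/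
def Blk (x : ℤ → Fin 2) (i : ℤ) (m : ℕ) : Prop :=
  (∀ k < m, x (i + (k : ℤ)) = a k) ∧ x (i + (m : ℤ)) = 0 ∧ a m = 1

/-- Points all of whose tails are strictly smaller than `a`. -/
def YY : Set (ℤ → Fin 2) := {x | ∀ i, ∃ m, Blk a x i m}

/-- `j` lies strictly inside some block. -/
def Inner (x : ℤ → Fin 2) (j : ℤ) : Prop := ∃ i m, Blk a x i m ∧ i < j ∧ j ≤ i + (m : ℤ)

open scoped Classical in
/-- The code marking the cut points. -/
noncomputable def phi (x : ℤ → Fin 2) : ℤ → Fin 2 := fun j => if Inner a x j then 0 else 1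

/-- Self-admissibility of `a`. -/
def SelfAdm : Prop := ∀ k l : ℕ, (∀ j < l, a (k + j) = a j) → a (k + l) = 1 → a l = 1

variable {a}

lemma phi_one {x : ℤ → Fin 2} {j : ℤ} : phi a x j = 1 ↔ ¬ Inner a x j := by
  unfold phi; split_ifs with h <;> simp [h]

lemma phi_zero {x : ℤ → Fin 2} {j : ℤ} : phi a x j = 0 ↔ Inner a x j := by
  unfold phi; split_ifs with h <;> simp [h]

lemma nested (hL : SelfAdm a) {x : ℤ → Fin 2} {i i' : ℤ} {m m' : ℕ} (h : Blk a x i m)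
    (h' : Blk a x i' m') (h1 : i ≤ i') (h2 : i' ≤ i + m) : i' + m' ≤ i + m := by
  by_contra hlt
  obtain ⟨k, rfl⟩ : ∃ k : ℕ, i' = i + k := ⟨(i' - i).toNat, by omega⟩
  obtain ⟨l, rfl⟩ : ∃ l : ℕ, m = k + l := ⟨m - k, by omega⟩
  have e1 : a l = 1 := by
    apply hL k l
    · intro j hj
      rw [← h.1 (k + j) (by omega), ← h'.1 j (by omega)]
      congr 1
      push_cast
      ring
    · exact h.2.2
  have e2 := h'.1 l (by omega)
  have e3 := h.2.1
  push_cast at e3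
  rw [← add_assoc, e2, e1] at e3
  exact absurd e3 (by decide)

lemma blk_le {N : ℕ} (h0 : ∀ m > N, a m = 0) {x : ℤ → Fin 2} {i : ℤ} {m : ℕ} (h : Blk a x i m) : m ≤ N := by
  by_contra hlt
  exact fin2_ne (h0 m (by omega)) h.2.2

lemma exists_cut {N : ℕ} (h0 : ∀ m > N, a m = 0) (hL : SelfAdm a) {x : ℤ → Fin 2} (hx : x ∈ YY a) (j : ℤ) :
    ∃ c m, Blk a x c m ∧ ¬ Inner a x c ∧ c ≤ j ∧ j ≤ c + (m : ℕ) := by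
  classical
  let Q : ℕ → Prop := fun k => ∃ m : ℕ, Blk a x (j - N + k) m ∧ j - N + k ≤ j ∧ j ≤ j - N + k + m
  have hex : ∃ k, Q k := by
    obtain ⟨m, hm⟩ := hx j
    exact ⟨N, m, by simpa using hm, by omega, by omega⟩
  obtain ⟨m, hm, h1, h2⟩ := Nat.find_spec hex
  refine ⟨_, m, hm, ?_, h1, h2⟩
  rintro ⟨i, m', hi, hi1, hi2⟩
  have hn := nested hL hi hm hi1.le hi2
  have hle := blk_le h0 hi
  apply Nat.find_min hex (m := (i - j + N).toNat) (by omega)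
  have e : j - N + ((i - j + N).toNat : ℤ) = i := by omega
  refine ⟨m', ?_, ?_, ?_⟩ <;> rw [e]
  · exact hi
  · omega
  · omega

lemma cut_next (hL : SelfAdm a) {x : ℤ → Fin 2} {c : ℤ} {m : ℕ} (h : Blk a x c m)
    (hc : ¬ Inner a x c) : ¬ Inner a x (c + m + 1) := by
  rintro ⟨i, m', hi, hi1, hi2⟩
  rcases lt_or_ge i c with hlt | hge
  · exact hc ⟨i, m', hi, hlt, by omega⟩
  · have := nested hL h hi hge (by omega)
    omega

lemma cons_phi (hL : SelfAdm a) {x : ℤ → Fin 2} {c : ℤ} {m : ℕ} (h : Blk a x c m)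
    (hc : ¬ Inner a x c) : Cons (phi a x) c (c + m + 1) := by
  refine ⟨by omega, phi_one.2 hc, phi_one.2 (cut_next hL h hc), ?_⟩
  intro k h1 h2
  exact phi_zero.2 ⟨c, m, h, h1, by omega⟩

lemma phi_mem {N : ℕ} (h0 : ∀ m > N, a m = 0) (hL : SelfAdm a) {x : ℤ → Fin 2} (hx : x ∈ YY a) :
    phi a x ∈ SGap {n | a n = 1} := by
  refine ⟨?_, fun _ => ⟨?_, ?_⟩⟩
  · intro i j hij hi hj hz
    obtain ⟨m, hm⟩ := hx i
    have h1 := cons_phi hL hm (phi_one.1 hi)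
    have h2 : Cons (phi a x) i j := ⟨hij, hi, hj, hz⟩
    obtain ⟨-, rfl⟩ := h2.unique h1 le_rfl hij le_rfl h1.1
    have : (i + m + 1 - i - 1 : ℤ).toNat = m := by omega
    rw [this]
    exact hm.2.2
  · intro M
    obtain ⟨c, m, hm, hc, h1, h2⟩ := exists_cut h0 hL hx M
    exact ⟨c + m + 1, by omega, phi_one.2 (cut_next hL hm hc)⟩
  · intro M
    obtain ⟨c, m, hm, hc, h1, h2⟩ := exists_cut h0 hL hx M
    exact ⟨c, h1, phi_one.2 hc⟩

lemma phi_inj {N : ℕ} (h0 : ∀ m > N, a m = 0) (hL : SelfAdm a) : Set.InjOn (phi a) (YY a) := by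
  intro x hx x' hx' he
  funext j
  obtain ⟨c, m, hm, hc, h1, h2⟩ := exists_cut h0 hL hx j
  obtain ⟨m', hm'⟩ := hx' c
  have hc' : ¬ Inner a x' c := by rw [← phi_one, ← he, phi_one]; exact hc
  have e1 := cons_phi hL hm hc
  have e2 := cons_phi hL hm' hc'
  rw [← he] at e2
  obtain ⟨-, e3⟩ := e1.unique e2 le_rfl e1.1 le_rfl e2.1
  obtain rfl : m = m' := by omega
  obtain ⟨k, rfl⟩ : ∃ k : ℕ, j = c + k := ⟨(j - c).toNat, by omega⟩
  rcases Nat.lt_or_ge k m with hk | hk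
  · rw [hm.1 k hk, hm'.1 k hk]
  · obtain rfl : k = m := by omega
    rw [hm.2.1, hm'.2.1]

lemma S_finite {N : ℕ} (h0 : ∀ m > N, a m = 0) : {n | a n = 1}.Finite := by
  apply (Set.finite_Iic N).subset
  intro n hn
  by_contra hlt
  exact fin2_ne (h0 n (by simpa using hlt)) hn

lemma phi_surj {N : ℕ} (h0 : ∀ m > N, a m = 0) (hL : SelfAdm a) {y : ℤ → Fin 2} (hy : y ∈ SGap {n | a n = 1}) :
    ∃ x ∈ YY a, phi a x = y := by
  classical
  have hcons := SGap_cons (S_finite h0) hy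
  choose c d hcd hc hd using hcons
  set x : ℤ → Fin 2 := fun j => if j + 1 = d j then 0 else a (j - c j).toNat with hx
  have hB : ∀ j, Blk a x (c j) (d j - c j - 1).toNat := by
    intro j
    have hlt := (hcd j).1
    refine ⟨?_, ?_, SGap_gap hy (hcd j)⟩
    · intro k hk
      obtain ⟨e1, e2⟩ := (hcd j).unique (hcd (c j + k)) (j := c j + k) (by omega) (by omega)
        (hc _) (hd _)
      simp only [hx]
      rw [← e2, ← e1, if_neg (by omega)]
      congr 1
      omega
    · obtain ⟨e1, e2⟩ := (hcd j).unique (hcd (d j - 1)) (j := d j - 1) (by omega) (by omega)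
        (hc _) (hd _)
      have : c j + ((d j - c j - 1).toNat : ℤ) = d j - 1 := by omega
      rw [this]
      simp only [hx]
      rw [← e2, if_pos (by omega)]
  refine ⟨x, ?_, ?_⟩
  · intro i
    have hb := hB i
    have hci := hc i
    have hdi := hd i
    obtain ⟨k, hk⟩ : ∃ k : ℕ, i = c i + k := ⟨(i - c i).toNat, by omega⟩
    obtain ⟨l, hl⟩ : ∃ l : ℕ, (d i - c i - 1).toNat = k + l :=
      ⟨(d i - c i - 1).toNat - k, by omega⟩
    rw [hl] at hb
    have hxa : ∀ j < l, x (i + j) = a (k + j) := by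
      intro j hj
      rw [← hb.1 (k + j) (by omega)]
      congr 1
      push_cast
      omega
    by_cases hag : ∃ j, j < l ∧ a (k + j) ≠ a j
    · have hmin := fun j => Nat.find_min (H := hag) (m := j)
      obtain ⟨s1, s2⟩ := Nat.find_spec hag
      set q := Nat.find hag
      have hag' : ∀ j < q, a (k + j) = a j := by
        intro j hj
        by_contra hne
        exact hmin j hj ⟨by omega, hne⟩
      have ha0 : a (k + q) = 0 := by
        apply fin2_zero
        intro h1
        exact s2 (h1.trans (hL k q hag' h1).symm)
      refine ⟨q, ?_, ?_, ?_⟩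
      · intro j hj
        rw [hxa j (by omega), hag' j hj]
      · rw [hxa q s1, ha0]
      · by_contra h1
        exact s2 (ha0.trans (fin2_zero h1).symm)
    · push Not at hag
      refine ⟨l, ?_, ?_, hL k l hag hb.2.2⟩
      · intro j hj
        rw [hxa j hj, hag j hj]
      · rw [← hb.2.1]
        congr 1
        push_cast
        omega
  · funext j
    by_cases hj : y j = 1
    · rw [hj, phi_one]
      rintro ⟨i, m, hm, h1, h2⟩
      have hci := hc i
      have hdi := hd i
      have hn := nested hL (hB i) hm hci (by omega)
      have := (hcd i).le_of_one hj (by omega)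
      omega
    · rw [fin2_zero hj, phi_zero]
      have hne : c j ≠ j := fun h => hj (h ▸ (hcd j).2.1)
      have hcj := hc j
      have hdj := hd j
      exact ⟨c j, _, hB j, by omega, by omega⟩

lemma blk_shift {x : ℤ → Fin 2} {n : ℕ} {i : ℤ} {m : ℕ} :
    Blk a (shiftMap^[n] x) i m ↔ Blk a x (i + n) m := by
  rw [iter_shift]
  unfold Blk
  have : ∀ k : ℕ, i + (k : ℤ) + n = i + n + k := fun k => by ring
  simp only [this]

lemma phi_shift (x : ℤ → Fin 2) (n : ℕ) : phi a (shiftMap^[n] x) = shiftMap^[n] (phi a x) := by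
  funext j
  have key : Inner a (shiftMap^[n] x) j ↔ Inner a x (j + n) := by
    constructor
    · rintro ⟨i, m, h, h1, h2⟩
      exact ⟨i + n, m, blk_shift.1 h, by omega, by omega⟩
    · rintro ⟨i, m, h, h1, h2⟩
      refine ⟨i - n, m, blk_shift.2 ?_, by omega, by omega⟩
      simpa using h
  rw [iter_shift (phi a x)]
  show _ = phi a x (j + n)
  by_cases h : Inner a x (j + n)
  · rw [phi_zero.2 (key.2 h), phi_zero.2 h]
  · rw [phi_one.2 (fun h' => h (key.1 h')), phi_one.2 h]

lemma pcount_YY {N : ℕ} (h0 : ∀ m > N, a m = 0) (hL : SelfAdm a) (n : ℕ) :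
    pcount (YY a) n = pcount (SGap {n | a n = 1}) n := by
  unfold pcount
  have : perPts (SGap {n | a n = 1}) n = phi a '' perPts (YY a) n := by
    ext y
    constructor
    · rintro ⟨hy, hp⟩
      obtain ⟨x, hx, rfl⟩ := phi_surj h0 hL hy
      refine ⟨x, ⟨hx, ?_⟩, rfl⟩
      apply phi_inj h0 hL _ hx
      · rw [phi_shift, hp]
      · intro i
        obtain ⟨m, hm⟩ := hx (i + n)
        exact ⟨m, blk_shift.2 hm⟩
    · rintro ⟨x, ⟨hx, hp⟩, rfl⟩
      exact ⟨phi_mem h0 hL hx, by rw [← phi_shift, hp]⟩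
  rw [this, Set.InjOn.ncard_image ((phi_inj h0 hL).mono fun x hx => hx.1)]

end Conj

/-! ### Facts on beta expansions -/

lemma selfAdm_beta (β : ℝ) (hβ1 : 1 < β) (hβ2 : β ≤ 2) : SelfAdm (betaDigit β) := by
  have hpos : 0 < β := by linarith
  have hd : ∀ n, betaDigit β n = 1 ↔ 1 ≤ β * (β ^ n * betaRem β n) := by
    intro n
    unfold betaDigit
    have : β⁻¹ ^ (n + 1) ≤ betaRem β n ↔ 1 ≤ β * (β ^ n * betaRem β n) := by
      rw [inv_pow, inv_le_iff_one_le_mul₀' (by positivity)]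
      ring_nf
    rw [← this]
    split_ifs with h <;> simp [h, -inv_pow]
  have hT : ∀ n, β ^ (n + 1) * betaRem β (n + 1) =
      β * (β ^ n * betaRem β n) - (if betaDigit β n = 1 then 1 else 0) := by
    intro n
    have e : (betaDigit β n = 1) ↔ β⁻¹ ^ (n + 1) ≤ betaRem β n := by
      unfold betaDigit; split_ifs with h <;> simp [h, -inv_pow]
    rw [betaRem]
    simp only [e]
    split_ifs
    · rw [inv_pow]; field_simp; ring
    · ring
  have hle : ∀ n, β ^ n * betaRem β n ≤ 1 := by
    intro n
    induction n with
    | zero => simp [betaRem]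
    | succ n ih =>
      rw [hT]
      split_ifs with h
      · nlinarith
      · rw [hd] at h; linarith
  have hmono : ∀ k l, (∀ j < l, betaDigit β (k + j) = betaDigit β j) →
      β ^ (k + l) * betaRem β (k + l) ≤ β ^ l * betaRem β l := by
    intro k l
    induction l with
    | zero => intro _; simpa [betaRem] using hle k
    | succ l ih =>
      intro h
      have h1 := ih fun j hj => h j (by omega)
      rw [← add_assoc, hT, hT, h l (by omega)]
      have := mul_le_mul_of_nonneg_left h1 hpos.le
      linarith
  intro k l h h1
  rw [hd] at h1 ⊢
  have := mul_le_mul_of_nonneg_left (hmono k l h) hpos.le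
  linarith

lemma pcount_beta (β : ℝ) {N : ℕ} (hL : SelfAdm (betaDigit β)) (hN : betaDigit β N = 1)
    (h0 : ∀ m > N, betaDigit β m = 0) (n : ℕ) (hn : 0 < n) :
    pcount (betaShift β) n = pcount (YY (betaDigit β)) n := by
  unfold pcount
  congr 1
  ext x
  constructor
  · rintro ⟨hx, hp⟩
    refine ⟨fun i => ?_, hp⟩
    rcases hx i with h | ⟨m, h1, h2⟩
    · exfalso
      have ha0 : betaDigit β 0 = 1 := hL N 0 (by simp) hN
      have e0 := congrFun h 0
      have e1 := congrFun h (n * (N + 1))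
      have e2 : n * (N + 1) > N := by nlinarith
      rw [h0 _ e2] at e1
      have e3 := per_nat hp i (N + 1)
      push_cast at e0 e1 e3
      rw [e1, ← add_zero i, e0, ha0] at e3
      exact absurd e3 (by decide)
    · refine ⟨m, h1, ?_⟩
      change x (i + (m : ℤ)) < _ at h2
      revert h2
      generalize x (i + (m : ℤ)) = u
      generalize betaDigit β m = v
      revert u v
      decide
  · rintro ⟨hx, hp⟩
    refine ⟨fun i => ?_, hp⟩
    obtain ⟨m, h1, h2, h3⟩ := hx i
    refine Or.inr ⟨m, h1, ?_⟩
    show x (i + (m : ℤ)) < _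
    rw [h2, h3]
    decide

/-! ### Counting periodic points of the S-gap shift -/

section Count
variable (a : ℕ → Fin 2)

/-- Words on `[0,k]` starting and ending with `1` with all gaps allowed. -/
def Good (k : ℕ) : Set (ℤ → Fin 2) :=
  {w | w 0 = 1 ∧ w k = 1 ∧ (∀ i : ℤ, i < 0 ∨ (k : ℤ) < i → w i = 0) ∧
    ∀ c d, Cons w c d → a (d - c - 1).toNat = 1}

variable {a}

lemma Good.range {k : ℕ} {w : ℤ → Fin 2} (hw : w ∈ Good a k) {i : ℤ} (hi : w i = 1) :
    0 ≤ i ∧ i ≤ k := by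
  by_contra h
  exact fin2_ne (hw.2.2.1 i (by omega)) hi

lemma good_finite (k : ℕ) : (Good a k).Finite := by
  apply Set.Finite.of_finite_image (f := fun w : ℤ → Fin 2 => fun i : Fin (k + 1) => w (i : ℕ))
  · exact Set.toFinite _
  · intro w hw w' hw' h
    funext i
    by_cases hi : i < 0 ∨ (k : ℤ) < i
    · rw [hw.2.2.1 i hi, hw'.2.2.1 i hi]
    · push Not at hi
      have := congrFun h ⟨i.toNat, by omega⟩
      simpa [Int.toNat_of_nonneg hi.1] using this

lemma good_zero : (Good a 0).ncard = 1 := by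
  rw [Set.ncard_eq_one]
  refine ⟨fun i => if i = 0 then 1 else 0, ?_⟩
  ext w
  constructor
  · intro hw
    funext i
    by_cases hi : i = 0
    · subst hi; simpa using hw.1
    · simp only [hi, if_false]
      exact hw.2.2.1 i (by push_cast; omega)
  · rintro rfl
    refine ⟨by simp, by simp, ?_, ?_⟩
    · intro i hi
      have hi0 : i ≠ 0 := by push_cast at hi; omega
      simp [hi0]
    · rintro c d ⟨h1, h2, h3, -⟩
      have hc : c = 0 := by by_contra h; simp [h] at h2
      have hd : d = 0 := by by_contra h; simp [h] at h3
      omega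

lemma card_and (k m : ℕ) : Nat.card {w : ℤ → Fin 2 // a m = 1 ∧ w ∈ Good a k} =
    if a m = 1 then (Good a k).ncard else 0 := by
  split_ifs with h
  · simp only [h, true_and]
    rfl
  · simp [h]

lemma and_finite (k m : ℕ) : Finite {w : ℤ → Fin 2 // a m = 1 ∧ w ∈ Good a k} :=
  ((good_finite (a := a) k).subset fun w (hw : a m = 1 ∧ w ∈ Good a k) => hw.2).to_subtype

/-- Prepend a gap of length `m + 1`. -/
def pre (m : ℕ) (w : ℤ → Fin 2) : ℤ → Fin 2 := fun i => if i = 0 then 1 else w (i - (m + 1))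

lemma pre_zero (m : ℕ) (w : ℤ → Fin 2) : pre m w 0 = 1 := by simp [pre]

lemma pre_ne (m : ℕ) (w : ℤ → Fin 2) {i : ℤ} (hi : i ≠ 0) : pre m w i = w (i - (m + 1)) := by
  simp [pre, hi]

lemma pre_cons {k m : ℕ} {w : ℤ → Fin 2} (hw : w ∈ Good a k) : Cons (pre m w) 0 (m + 1) := by
  refine ⟨by omega, pre_zero _ _, ?_, ?_⟩
  · rw [pre_ne _ _ (by omega), sub_self, hw.1]
  · intro i h1 h2
    rw [pre_ne _ _ (by omega)]
    exact hw.2.2.1 _ (by omega)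

lemma pre_mem {k m : ℕ} (hm : m ≤ k) (ha : a m = 1) {w : ℤ → Fin 2} (hw : w ∈ Good a (k - m)) :
    pre m w ∈ Good a (k + 1) := by
  have hcast : ((k - m : ℕ) : ℤ) = k - m := by omega
  refine ⟨pre_zero _ _, ?_, ?_, ?_⟩
  · rw [pre_ne _ _ (by omega), ← hw.2.1]
    congr 1
    push_cast
    omega
  · intro i hi
    rw [pre_ne _ _ (by omega)]
    apply hw.2.2.1
    push_cast at hi
    omega
  · intro c d hcd
    have hpc := pre_cons (m := m) hw
    have hc0 : 0 ≤ c := by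
      by_contra hc
      have h1 := hcd.2.1
      rw [pre_ne _ _ (by omega)] at h1
      have := Good.range hw h1
      omega
    rcases hc0.eq_or_lt with rfl | hc0
    · obtain ⟨-, rfl⟩ := hcd.unique hpc le_rfl hcd.1 le_rfl hpc.1
      have : ((m : ℤ) + 1 - 0 - 1).toNat = m := by omega
      rw [this, ha]
    · have := hw.2.2.2 (c - (m + 1)) (d - (m + 1)) ⟨by have := hcd.1; omega, ?_, ?_, ?_⟩
      · rw [← this]
        congr 2
        omega
      · rw [← pre_ne m w (i := c) (by omega)]; exact hcd.2.1
      · rw [← pre_ne m w (i := d) (by have := hcd.1; omega)]; exact hcd.2.2.1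
      · intro i h1 h2
        have h3 := hpc.le_of_one hcd.2.1 (by omega)
        have h4 := hcd.2.2.2 (i + (m + 1)) (by omega) (by omega)
        rw [pre_ne _ _ (by omega)] at h4
        simpa using h4

lemma good_succ (k : ℕ) : (Good a (k + 1)).ncard =
    ∑ m ∈ Finset.range (k + 1), if a m = 1 then (Good a (k - m)).ncard else 0 := by
  let F : (Σ m : Fin (k + 1), {w : ℤ → Fin 2 // a m = 1 ∧ w ∈ Good a (k - m)}) → Good a (k + 1) :=
    fun p => ⟨pre p.1 p.2.1, pre_mem (by have := p.1.2; omega) p.2.2.1 p.2.2.2⟩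
  have hF : Function.Bijective F := by
    constructor
    · rintro ⟨m, w, ha, hw⟩ ⟨m', w', ha', hw'⟩ h
      have h' : pre m w = pre m' w' := congrArg Subtype.val h
      have c1 := pre_cons (m := m) hw
      have c2 := pre_cons (m := m') hw'
      rw [← h'] at c2
      obtain ⟨-, e⟩ := c1.unique c2 le_rfl c1.1 le_rfl c2.1
      obtain rfl : m = m' := by ext; omega
      have : w = w' := by
        funext i
        have h1 := congrFun h' (i + (m + 1))
        by_cases hi : i < 0
        · rw [hw.2.2.1 i (by omega), hw'.2.2.1 i (by omega)]
        · rw [pre_ne _ _ (by omega), pre_ne _ _ (by omega)] at h1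
          simpa using h1
      subst this
      rfl
    · rintro ⟨w, hw⟩
      obtain ⟨d, hd, hcd⟩ := exists_next (y := w) (c := 0) (e := (k + 1 : ℕ)) hw.1 hw.2.1 (by omega)
      have hd0 := hcd.1
      push_cast at hd
      obtain ⟨m, rfl⟩ : ∃ m : ℕ, d = m + 1 := ⟨(d - 1).toNat, by omega⟩
      have hm : m < k + 1 := by omega
      have hcast : ((k - m : ℕ) : ℤ) = k - m := by omega
      have ham : a m = 1 := by
        have := hw.2.2.2 _ _ hcd
        have e : ((m : ℤ) + 1 - 0 - 1).toNat = m := by omega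
        rwa [e] at this
      let w' : ℤ → Fin 2 := fun i => if i < 0 then 0 else w (i + (m + 1))
      have hneg : ∀ i < 0, w' i = 0 := fun i hi => if_pos hi
      have hnn : ∀ i, 0 ≤ i → w' i = w (i + (m + 1)) := fun i hi => if_neg (by omega)
      have hw' : w' ∈ Good a (k - m) := by
        refine ⟨?_, ?_, ?_, ?_⟩
        · rw [hnn _ le_rfl, zero_add]; exact hcd.2.2.1
        · rw [hnn _ (by omega), ← hw.2.1]
          congr 1
          push_cast
          omega
        · intro i hi
          by_cases h : i < 0
          · exact hneg i h
          · rw [hnn i (by omega)]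
            apply hw.2.2.1
            push_cast
            omega
        · intro c d h
          have hc0 : 0 ≤ c := by
            by_contra hc
            exact fin2_ne (hneg c (by omega)) h.2.1
          have hlt := h.1
          have := hw.2.2.2 (c + (m + 1)) (d + (m + 1)) ⟨by omega, ?_, ?_, ?_⟩
          · rw [← this]
            congr 2
            omega
          · rw [← hnn c hc0]; exact h.2.1
          · rw [← hnn d (by omega)]; exact h.2.2.1
          · intro i h1 h2
            have h3 := h.2.2.2 (i - (m + 1)) (by omega) (by omega)
            rw [hnn _ (by omega)] at h3
            simpa using h3
      refine ⟨⟨⟨m, hm⟩, w', ham, hw'⟩, ?_⟩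
      apply Subtype.ext
      show pre m w' = w
      funext i
      by_cases hi : i = 0
      · subst hi; rw [pre_zero, hw.1]
      · rw [pre_ne _ _ hi]
        by_cases h1 : i - (m + 1) < 0
        · rw [hneg _ h1]
          by_cases h2 : i < 0
          · rw [hw.2.2.1 i (Or.inl h2)]
          · rw [hcd.2.2.2 i (by omega) (by omega)]
        · rw [hnn _ (by omega)]
          simp
  have hc := Nat.card_congr (Equiv.ofBijective F hF)
  have : ∀ m : Fin (k + 1), Finite {w : ℤ → Fin 2 // a m = 1 ∧ w ∈ Good a (k - m)} :=
    fun m => and_finite _ _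
  rw [Nat.card_sigma] at hc
  change _ = (Good a (k + 1)).ncard at hc
  rw [← hc, Finset.sum_range]
  apply Finset.sum_congr rfl
  intro m _
  rw [card_and]

/-- Periodic continuation of `w`, placed at `m + 1 - o`, with period `n + 1`. -/
def per (n m o : ℕ) (w : ℤ → Fin 2) : ℤ → Fin 2 :=
  fun i => w ((i - (m + 1 - o)) % ((n : ℤ) + 1))

lemma per_eq (n m o : ℕ) (w : ℤ → Fin 2) {i r q : ℤ} (h1 : 0 ≤ r) (h2 : r < n + 1)
    (h : i = (m + 1 - o) + r + (n + 1) * q) : per n m o w i = w r := by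
  unfold per
  congr 1
  rw [h]
  have : ((m : ℤ) + 1 - o + r + (n + 1) * q - (m + 1 - o)) = r + (n + 1) * q := by ring
  rw [this, Int.add_mul_emod_self_left, Int.emod_eq_of_lt h1 h2]

lemma exists_rq (n m o : ℕ) (i : ℤ) : ∃ r q : ℤ, 0 ≤ r ∧ r < n + 1 ∧
    i = (m + 1 - o) + r + (n + 1) * q := by
  refine ⟨(i - (m + 1 - o)) % ((n : ℤ) + 1), (i - (m + 1 - o)) / ((n : ℤ) + 1),
    Int.emod_nonneg _ (by omega), Int.emod_lt_of_pos _ (by omega), ?_⟩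
  have := Int.emod_add_mul_ediv (i - (m + 1 - o)) ((n : ℤ) + 1)
  linarith

lemma per_cons {n m o : ℕ} (hm : m ≤ n) {w : ℤ → Fin 2} (hw : w ∈ Good a (n - m)) :
    Cons (per n m o w) (-o) (m + 1 - o) := by
  have hcast : ((n - m : ℕ) : ℤ) = n - m := by omega
  refine ⟨by omega, ?_, ?_, ?_⟩
  · rw [per_eq n m o w (r := ((n - m : ℕ) : ℤ)) (q := -1) (by omega) (by omega) (by rw [hcast]; ring)]
    exact hw.2.1
  · rw [per_eq n m o w (r := 0) (q := 0) (by omega) (by omega) (by ring)]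
    exact hw.1
  · intro k h1 h2
    rw [per_eq n m o w (r := k - (m + 1 - o) + (n + 1)) (q := -1) (by omega) (by omega) (by ring)]
    exact hw.2.2.1 _ (by omega)

lemma per_mem {n m o : ℕ} (hm : m ≤ n) (ha : a m = 1) {w : ℤ → Fin 2}
    (hw : w ∈ Good a (n - m)) : per n m o w ∈ perPts (SGap {n | a n = 1}) (n + 1) := by
  have hcast : ((n - m : ℕ) : ℤ) = n - m := by omega
  have hone : ∀ q : ℤ, per n m o w ((m + 1 - o) + (n + 1) * q) = 1 := by
    intro q
    rw [per_eq n m o w (r := 0) (q := q) (by omega) (by omega) (by ring)]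
    exact hw.1
  refine ⟨⟨?_, fun _ => ⟨?_, ?_⟩⟩, ?_⟩
  · intro i j hij hi hj hz
    have hcons : Cons (per n m o w) i j := ⟨hij, hi, hj, hz⟩
    show a (j - i - 1).toNat = 1
    obtain ⟨r, q, hr1, hr2, hiq⟩ := exists_rq n m o i
    have hper : ∀ t : ℤ, 0 ≤ r + t → r + t < n + 1 → per n m o w (i + t) = w (r + t) := by
      intro t h1 h2
      exact per_eq n m o w (q := q) h1 h2 (by rw [hiq]; ring)
    have hwr : w r = 1 := by
      have := hper 0 (by omega) (by omega)
      simp only [add_zero] at this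
      rw [← this]; exact hi
    have hrK := (Good.range hw hwr).2
    by_cases hjK : j - i ≤ (n - m) - r
    · have := hw.2.2.2 r (r + (j - i)) ⟨by omega, hwr, ?_, ?_⟩
      · rw [← this]
        congr 2
        omega
      · rw [← hper _ (by omega) (by omega)]
        simpa using hj
      · intro k h1 h2
        have h3 := hper (k - r) (by omega) (by omega)
        rw [hz _ (by omega) (by omega)] at h3
        rw [h3]
        congr 1
        omega
    · have hrK' : r = n - m := by
        by_contra hne
        have h3 := hper (n - m - r) (by omega) (by omega)
        rw [hz _ (by omega) (by omega)] at h3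
        have h4 := hw.2.1
        have h5 : r + ((n : ℤ) - m - r) = (n - m : ℕ) := by omega
        rw [h5, h4] at h3
        exact absurd h3 (by decide)
      have h1 : per n m o w (i + (m + 1)) = 1 := by
        rw [← hone (q + 1), hiq, hrK']
        congr 1
        ring
      have h2 := hcons.le_of_one h1 (by omega)
      have h3 : j = i + (m + 1) := by
        by_contra hne
        have h4 := hper (j - i) (by omega) (by omega)
        rw [hw.2.2.1 _ (by omega)] at h4
        have h5 : i + (j - i) = j := by ring
        rw [h5, hj] at h4
        exact absurd h4 (by decide)
      have h4 : (j - i - 1).toNat = m := by omega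
      rw [h4, ha]
  · intro M
    refine ⟨_, ?_, hone (|M| + o)⟩
    have h1 := le_abs_self M
    have h2 := abs_nonneg M
    nlinarith
  · intro M
    refine ⟨_, ?_, hone (-(|M| + m + 1))⟩
    have h1 := neg_abs_le M
    have h2 := abs_nonneg M
    nlinarith
  · rw [iter_shift]
    funext i
    obtain ⟨r, q, hr1, hr2, hiq⟩ := exists_rq n m o i
    show per n m o w (i + ((n + 1 : ℕ) : ℤ)) = _
    rw [per_eq n m o w hr1 hr2 hiq,
      per_eq n m o w (q := q + 1) hr1 hr2 (by rw [hiq]; push_cast; ring)]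

lemma pcount_SGap {N : ℕ} (h0 : ∀ m > N, a m = 0) (n : ℕ) :
    pcount (SGap {n | a n = 1}) (n + 1) =
    ∑ m ∈ Finset.range (n + 1), (m + 1) * if a m = 1 then (Good a (n - m)).ncard else 0 := by
  let F : (Σ m : Fin (n + 1), Fin (m + 1) × {w : ℤ → Fin 2 // a m = 1 ∧ w ∈ Good a (n - m)}) →
      perPts (SGap {n | a n = 1}) (n + 1) :=
    fun p => ⟨per n p.1 p.2.1 p.2.2.1,
      per_mem (by have := p.1.2; omega) p.2.2.2.1 p.2.2.2.2⟩
  have hF : Function.Bijective F := by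
    constructor
    · rintro ⟨⟨m, hm⟩, ⟨o, ho⟩, w, ha, hw⟩ ⟨⟨m', hm'⟩, ⟨o', ho'⟩, w', ha', hw'⟩ h
      have h' : per n m o w = per n m' o' w' := congrArg Subtype.val h
      simp only at ho ho' hw hw' ha ha'
      have c1 := per_cons (o := o) (by omega) hw
      have c2 := per_cons (o := o') (by omega) hw'
      rw [← h'] at c2
      obtain ⟨e1, e2⟩ := c1.unique c2 (j := 0) (by omega) (by omega) (by omega) (by omega)
      obtain rfl : o = o' := by omega
      obtain rfl : m = m' := by omega
      have : w = w' := by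
        funext i
        by_cases hi : i < 0 ∨ ((n - m : ℕ) : ℤ) < i
        · rw [hw.2.2.1 i hi, hw'.2.2.1 i hi]
        · have h1 := congrFun h' ((m + 1 - o) + i)
          rwa [per_eq n m o w (r := i) (q := 0) (by omega) (by omega) (by ring),
            per_eq n m o w' (r := i) (q := 0) (by omega) (by omega) (by ring)] at h1
      subst this
      rfl
    · rintro ⟨y, hy, hp⟩
      obtain ⟨c, d, hcd, hc, hd⟩ := SGap_cons (S_finite h0) hy 0
      have hlt := hcd.1
      have hper : ∀ i q : ℤ, y (i + (n + 1) * q) = y i := by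
        intro i q
        have := per_int hp i q
        push_cast at this
        exact this
      obtain ⟨o, rfl⟩ : ∃ o : ℕ, c = -(o : ℤ) := ⟨(-c).toNat, by omega⟩
      obtain ⟨m, rfl⟩ : ∃ m : ℕ, d = m + 1 - o := ⟨(d + o - 1).toNat, by omega⟩
      have hyn : y (-(o : ℤ) + (n + 1) * 1) = 1 := by rw [hper]; exact hcd.2.1
      have hle := hcd.le_of_one hyn (by omega)
      have hm : m < n + 1 := by omega
      have hcast : ((n - m : ℕ) : ℤ) = n - m := by omega
      have ham : a m = 1 := by
        have : a _ = 1 := SGap_gap hy hcd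
        have e : ((m : ℤ) + 1 - o - (-(o : ℤ)) - 1).toNat = m := by omega
        rwa [e] at this
      classical
      let w : ℤ → Fin 2 := fun i => if i < 0 ∨ ((n - m : ℕ) : ℤ) < i then 0 else y (m + 1 - o + i)
      have hout : ∀ i : ℤ, i < 0 ∨ ((n - m : ℕ) : ℤ) < i → w i = 0 := fun i hi => if_pos hi
      have hin : ∀ i : ℤ, 0 ≤ i → i ≤ n - m → w i = y (m + 1 - o + i) :=
        fun i h1 h2 => if_neg (by omega)
      have hw : w ∈ Good a (n - m) := by
        have hrange : ∀ i, w i = 1 → 0 ≤ i ∧ i ≤ n - m := by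
          intro i hi
          by_contra h
          exact fin2_ne (hout i (by omega)) hi
        refine ⟨?_, ?_, hout, ?_⟩
        · rw [hin 0 le_rfl (by omega), add_zero]; exact hcd.2.2.1
        · rw [hin _ (by omega) (by omega), ← hyn]
          congr 1
          omega
        · intro i j hij
          have hi := hrange i hij.2.1
          have hj := hrange j hij.2.2.1
          have h1 := hij.1
          have : a _ = 1 := SGap_gap hy (c := m + 1 - o + i) (d := m + 1 - o + j)
            ⟨by omega, ?_, ?_, ?_⟩
          · rw [← this]
            congr 2
            omega
          · rw [← hin i (by omega) (by omega)]; exact hij.2.1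
          · rw [← hin j (by omega) (by omega)]; exact hij.2.2.1
          · intro k h2 h3
            have h4 := hij.2.2.2 (k - (m + 1 - o)) (by omega) (by omega)
            rw [hin _ (by omega) (by omega)] at h4
            rw [← h4]
            congr 1
            omega
      refine ⟨⟨⟨m, hm⟩, ⟨o, by simp only; omega⟩, w, ham, hw⟩, ?_⟩
      apply Subtype.ext
      show per n m o w = y
      funext i
      obtain ⟨r, q, hr1, hr2, hiq⟩ := exists_rq n m o i
      rw [per_eq n m o w hr1 hr2 hiq, hiq, hper]
      by_cases hr : r ≤ n - m
      · rw [hin r hr1 hr]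
      · rw [hout r (by omega)]
        have h1 := hcd.2.2.2 (m + 1 - o + r - (n + 1)) (by omega) (by omega)
        rw [← h1, ← hper _ 1]
        congr 1
        ring
  have hc := Nat.card_congr (Equiv.ofBijective F hF)
  have : ∀ m : Fin (n + 1), Finite {w : ℤ → Fin 2 // a m = 1 ∧ w ∈ Good a (n - m)} :=
    fun m => and_finite _ _
  rw [Nat.card_sigma] at hc
  change _ = pcount (SGap {n | a n = 1}) (n + 1) at hc
  rw [← hc, Finset.sum_range]
  apply Finset.sum_congr rfl
  intro m _
  rw [Nat.card_prod, card_and, Nat.card_fin]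

end Count

end ZB

/-- If `β ∈ (1,2]` with `1_β = a_1 ⋯ a_n 0^∞`, `a_n = 1` (`X_β` SFT;
here `betaDigit β k = a_{k+1}` and the last nonzero digit is `a_{N+1}`), and
`{i_1 = 1 < ⋯ < i_t} = {i ≤ n : a_i = 1}`, then
`ζ_{σ_β}(t)·(1 - t^{i_1} - ⋯ - t^{i_t}) = 1`, and `ζ_{σ_β} = ζ_{σ_S}` for
`X(S) = ASS(X_β)`. -/
theorem zeta_beta_SFT
    (β : ℝ) (hβ1 : 1 < β) (hβ2 : β ≤ 2)
    (N : ℕ) (hN : betaDigit β N = 1) (h0 : ∀ m > N, betaDigit β m = 0) :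
    zetaPS (betaShift β) *
        (1 - ∑ k ∈ Finset.range (N + 1),
          if betaDigit β k = 1 then (PowerSeries.X : PowerSeries ℚ) ^ (k + 1) else 0) = 1 ∧
    zetaPS (betaShift β) = zetaPS (SGap (assocS β)) := by
  have hL := ZB.selfAdm_beta β hβ1 hβ2
  have hpc : ∀ n, 0 < n → pcount (betaShift β) n = pcount (SGap (assocS β)) n := by
    intro n hn
    rw [ZB.pcount_beta β hL hN h0 n hn, ZB.pcount_YY h0 hL n]
    rfl
  constructor
  · apply ZB.zeta_alg (pcount (betaShift β)) (fun k => ((ZB.Good (betaDigit β) k).ncard : ℚ))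
      (fun m => if betaDigit β m = 1 then 1 else 0)
    · rw [map_sum]
      apply Finset.sum_eq_zero
      intro k _
      split_ifs <;> simp
    · intro n
      rw [map_sum]
      have h1 : ∀ k ∈ Finset.range (N + 1), PowerSeries.coeff (n + 1)
          (if betaDigit β k = 1 then (PowerSeries.X : PowerSeries ℚ) ^ (k + 1) else 0) =
          if n = k then (if betaDigit β n = 1 then 1 else 0) else 0 := by
        intro k _
        by_cases hk : n = k
        · subst hk
          rw [if_pos rfl]
          split_ifs <;> simp [PowerSeries.coeff_X_pow]
        · rw [if_neg hk]
          split_ifs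
          · rw [PowerSeries.coeff_X_pow, if_neg (by omega)]
          · simp
      rw [Finset.sum_congr rfl h1, Finset.sum_ite_eq]
      by_cases hn : n ∈ Finset.range (N + 1)
      · rw [if_pos hn]
      · rw [if_neg hn, h0 n (by simp at hn; omega)]
        simp
    · simp [ZB.good_zero]
    · intro k
      rw [ZB.good_succ]
      push_cast
      apply Finset.sum_congr rfl
      intro m _
      split_ifs <;> simp
    · intro n
      rw [hpc _ (by omega)]
      have := ZB.pcount_SGap h0 n
      change pcount (SGap (assocS β)) (n + 1) = _ at this
      rw [this]
      push_cast
      apply Finset.sum_congr rfl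
      intro m _
      split_ifs <;> simp
  · unfold zetaPS
    congr 2
    funext n
    by_cases hn : n = 0
    · simp [hn]
    · rw [hpc n (by omega)]
end

section
/- Let β ∈ (1,2] be such that X_β is not sofic (1_β is not eventually periodic), and let X(S) = ASS(X_β). Then for every n ∈ ℕ, the number of points x ∈ X(S) with σ^n x = x equals the number of points x ∈ X_β with σ^n x = x, plus one: |P_n(X(S))| = |P_n(X_β)| + 1. -/
namespace PCount

/-- First disagreement with `a` from position `i` happens at offset `k`, and is strictly below. -/
def D (a : ℕ → Fin 2) (x : ℤ → Fin 2) (i : ℤ) (k : ℕ) : Prop :=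
  (∀ l < k, x (i + (l : ℤ)) = a l) ∧ x (i + (k : ℤ)) < a k

/-- No block crosses position `m`. -/
def R (a : ℕ → Fin 2) (x : ℤ → Fin 2) (m : ℤ) : Prop :=
  ∀ (i : ℤ) (k : ℕ), i < m → D a x i k → i + k + 1 ≤ m

/-- Strict Parry condition. -/
def Parry (a : ℕ → Fin 2) : Prop :=
  ∀ p : ℕ, 1 ≤ p → ∃ r : ℕ, (∀ k < r, a (p + k) = a k) ∧ a (p + r) < a r

lemma fin2_lt {u v : Fin 2} (h : u < v) : u = 0 ∧ v = 1 := by omega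

lemma iter_shift {A : Type} (n : ℕ) (x : ℤ → A) (i : ℤ) : shiftMap^[n] x i = x (i + n) := by
  induction n generalizing i with
  | zero => simp
  | succ n ih =>
    rw [Function.iterate_succ_apply']
    show shiftMap^[n] x (i + 1) = _
    rw [ih]
    congr 1
    push_cast
    ring

lemma per_iff {A : Type} (n : ℕ) (x : ℤ → A) :
    shiftMap^[n] x = x ↔ ∀ i : ℤ, x (i + n) = x i := by
  constructor
  · intro h i
    rw [← iter_shift n x i, h]
  · intro h
    funext i
    rw [iter_shift, h]

lemma per_nat {A : Type} {P : ℤ → A} {n : ℤ} (h : ∀ i : ℤ, P (i + n) = P i) (t : ℕ) (i : ℤ) :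
    P (i + t * n) = P i := by
  induction t with
  | zero => simp
  | succ t ih =>
    rw [← ih, ← h (i + t * n)]
    congr 1
    push_cast
    ring

lemma per_int {A : Type} {P : ℤ → A} {n : ℤ} (h : ∀ i : ℤ, P (i + n) = P i) (t : ℤ) (i : ℤ) :
    P (i + t * n) = P i := by
  obtain ⟨u, rfl | rfl⟩ := t.eq_nat_or_neg
  · exact per_nat h u i
  · rw [← per_nat h u (i + -(u : ℤ) * n)]
    congr 1
    ring

section
variable {a : ℕ → Fin 2} {x : ℤ → Fin 2}

lemma D_uniq {i : ℤ} {k k' : ℕ} (h : D a x i k) (h' : D a x i k') : k = k' := by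
  rcases lt_trichotomy k k' with hl | hl | hl
  · have := h'.1 k hl
    have h2 := h.2
    rw [this] at h2
    exact absurd h2 (lt_irrefl _)
  · exact hl
  · have := h.1 k' hl
    have h2 := h'.2
    rw [this] at h2
    exact absurd h2 (lt_irrefl _)

lemma D_nest (hP : Parry a) {i : ℤ} {k p : ℕ} (h : D a x i k) (hp1 : 1 ≤ p) (hpk : p ≤ k) :
    ∃ k', D a x (i + p) k' ∧ p + k' ≤ k := by
  obtain ⟨r, hr1, hr2⟩ := hP p hp1
  have e : ∀ l : ℕ, i + (p : ℤ) + (l : ℤ) = i + ((p + l : ℕ) : ℤ) := by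
    intro l; push_cast; ring
  by_cases hc : p + r < k
  · refine ⟨r, ⟨?_, ?_⟩, hc.le⟩
    · intro l hl
      rw [e, h.1 _ (by omega), hr1 l hl]
    · rw [e, h.1 _ hc]
      exact hr2
  · refine ⟨k - p, ⟨?_, ?_⟩, by omega⟩
    · intro l hl
      rw [e, h.1 _ (by omega), hr1 l (by omega)]
    · rw [e, show p + (k - p) = k by omega]
      refine lt_of_lt_of_le h.2 ?_
      by_cases hkr : k - p < r
      · rw [← hr1 _ hkr, show p + (k - p) = k by omega]
      · have : k - p = r := by omega
        rw [this, show k = p + r by omega]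
        exact hr2.le

lemma D_nest' (hP : Parry a) {i j : ℤ} {k : ℕ} (h : D a x i k) (h1 : i < j) (h2 : j ≤ i + k) :
    ∃ k', D a x j k' ∧ j + k' ≤ i + k := by
  obtain ⟨p, hp⟩ : ∃ p : ℕ, j = i + p := ⟨(j - i).toNat, by omega⟩
  subst hp
  obtain ⟨k', h3, h4⟩ := D_nest hP h (p := p) (by omega) (by omega)
  exact ⟨k', h3, by omega⟩

lemma R_next (hP : Parry a) {i : ℤ} {k : ℕ} (hR : R a x i) (h : D a x i k) :
    R a x (i + k + 1) := by
  intro i' k' hi' h'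
  rcases lt_trichotomy i' i with hl | hl | hl
  · have := hR i' k' hl h'
    omega
  · subst hl
    rw [D_uniq h h']
  · obtain ⟨k2, h3, h4⟩ := D_nest' hP h hl (by omega)
    have := D_uniq h' h3
    omega

lemma R_gap {i m : ℤ} {k : ℕ} (h : D a x i k) (hm : R a x m) (him : i < m) : i + k + 1 ≤ m :=
  hm i k him h

variable {n : ℕ}

lemma D_per (hx : ∀ i : ℤ, x (i + n) = x i) (i : ℤ) (k : ℕ) : D a x (i + n) k = D a x i k := by
  have : ∀ l : ℕ, x (i + n + l) = x (i + l) := by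
    intro l
    rw [← hx (i + l)]
    congr 1
    ring
  simp only [D, this]

lemma R_per (hx : ∀ i : ℤ, x (i + n) = x i) (m : ℤ) : R a x (m + n) = R a x m := by
  apply propext
  constructor
  · intro h i k hi hD
    have := h (i + n) k (by omega) (by rw [D_per hx]; exact hD)
    omega
  · intro h i k hi hD
    have := h (i - n) k (by omega) (by rw [← D_per hx]; simpa using hD)
    omega

lemma R_exists (hP : Parry a) (hn : 1 ≤ n) (hx : ∀ i : ℤ, x (i + n) = x i)
    (hG : ∀ i, ∃ k, D a x i k) : ∃ m, R a x m := by
  choose K hK using hG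
  have hKp : ∀ i : ℤ, K (i + n) = K i := by
    intro i
    have := hK (i + n)
    rw [D_per hx] at this
    exact D_uniq this (hK i)
  obtain ⟨i0, -, hi0⟩ := Finset.exists_max_image (Finset.Ico (0 : ℤ) n) K ⟨0, by simp; omega⟩
  have hmax : ∀ i, K i ≤ K i0 := by
    intro i
    have h1 := hi0 (i % n) (by
      simp only [Finset.mem_Ico]
      exact ⟨Int.emod_nonneg _ (by omega), Int.emod_lt_of_pos _ (by omega)⟩)
    have h2 := per_int hKp (i / n) (i % n)
    have h3 : i % n + i / n * n = i := by
      rw [mul_comm]; exact Int.emod_add_mul_ediv i n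
    rw [h3] at h2
    omega
  refine ⟨i0 + K i0 + 1, ?_⟩
  intro i k hi hD
  have hk := D_uniq hD (hK i)
  have := hmax i
  by_cases hle : i ≤ i0
  · omega
  · obtain ⟨k2, h3, h4⟩ := D_nest' hP (hK i0) (not_le.1 hle) (by omega)
    have := D_uniq hD h3
    omega

end

/-- Last element below. -/
lemma exists_last {P : ℤ → Prop} {n : ℕ} (hn : 1 ≤ n) (hp : ∀ i : ℤ, P (i + n) = P i)
    (hex : ∃ i, P i) (m : ℤ) : ∃ i, P i ∧ i ≤ m ∧ ∀ k, i < k → k ≤ m → ¬ P k := by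
  obtain ⟨i0, h0⟩ := hex
  have hx : ∃ i, P i ∧ i ≤ m := by
    refine ⟨i0 + (-|i0 - m|) * n, ?_, ?_⟩
    · rw [per_int hp]; exact h0
    · have h1 : i0 - m ≤ |i0 - m| := le_abs_self _
      have h2 : 0 ≤ |i0 - m| := abs_nonneg _
      have h3 : (1 : ℤ) ≤ n := by omega
      nlinarith
  obtain ⟨ub, ⟨h1, h2⟩, h3⟩ := Int.exists_greatest_of_bdd (P := fun i => P i ∧ i ≤ m)
    ⟨m, fun z hz => hz.2⟩ hx
  refine ⟨ub, h1, h2, ?_⟩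
  intro k hk hkm hPk
  have := h3 k ⟨hPk, hkm⟩
  omega

lemma exists_first {P : ℤ → Prop} {n : ℕ} (hn : 1 ≤ n) (hp : ∀ i : ℤ, P (i + n) = P i)
    (hex : ∃ i, P i) (m : ℤ) : ∃ i, P i ∧ m < i ∧ ∀ k, m < k → k < i → ¬ P k := by
  obtain ⟨i, h1, h2, h3⟩ := exists_last (P := fun i => P (-i)) hn
    (fun i => by
      show P (-(i + n)) = P (-i)
      rw [← hp (-(i + n))]
      congr 1
      ring) (by
      obtain ⟨i, hi⟩ := hex
      exact ⟨-i, by simpa using hi⟩) (-m - 1)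
  refine ⟨-i, h1, by omega, ?_⟩
  intro k hk hk2 hPk
  exact h3 (-k) (by omega) (by omega) (by simpa using hPk)

open scoped Classical in
/-- Block-start indicator. -/
noncomputable def phi (a : ℕ → Fin 2) (x : ℤ → Fin 2) : ℤ → Fin 2 :=
  fun m => if R a x m then 1 else 0

lemma phi_one {a : ℕ → Fin 2} {x : ℤ → Fin 2} {m : ℤ} : phi a x m = 1 ↔ R a x m := by
  unfold phi
  split_ifs with h <;> simp [h]

lemma phi_zero {a : ℕ → Fin 2} {x : ℤ → Fin 2} {m : ℤ} : phi a x m = 0 ↔ ¬ R a x m := by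
  unfold phi
  split_ifs with h <;> simp [h]

lemma phi_inj {a : ℕ → Fin 2} (hP : Parry a) {n : ℕ} (hn : 1 ≤ n) {x x' : ℤ → Fin 2}
    (hx : ∀ i : ℤ, x (i + n) = x i) (hx' : ∀ i : ℤ, x' (i + n) = x' i)
    (hG : ∀ i, ∃ k, D a x i k) (hG' : ∀ i, ∃ k, D a x' i k)
    (h : phi a x = phi a x') : x = x' := by
  have hR : ∀ m, R a x m ↔ R a x' m := by
    intro m
    rw [← phi_one, h, phi_one]
  funext m
  obtain ⟨i, h1, h2, h3⟩ := exists_last hn (R_per (a := a) hx) (R_exists hP hn hx hG) m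
  obtain ⟨k, hk⟩ := hG i
  obtain ⟨k', hk'⟩ := hG' i
  have n1 := R_next hP h1 hk
  have n2 := R_next hP ((hR i).1 h1) hk'
  have g1 := R_gap hk ((hR _).2 n2) (by omega)
  have g2 := R_gap hk' ((hR _).1 n1) (by omega)
  have hkk : k = k' := by omega
  subst hkk
  have hm : m < i + k + 1 := by
    by_contra hc
    exact h3 _ (by omega) (not_lt.1 hc) n1
  obtain ⟨l, rfl⟩ : ∃ l : ℕ, m = i + l := ⟨(m - i).toNat, by omega⟩
  by_cases hl : l < k
  · rw [hk.1 l hl, hk'.1 l hl]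
  · have : l = k := by omega
    subst this
    rw [(fin2_lt hk.2).1, (fin2_lt hk'.2).1]

lemma phi_surj {a : ℕ → Fin 2} (hP : Parry a) {n : ℕ} (hn : 1 ≤ n) {y : ℤ → Fin 2}
    (hy : ∀ i : ℤ, y (i + n) = y i) (hex : ∃ i, y i = 1)
    (hS : ∀ i j : ℤ, i < j → y i = 1 → y j = 1 →
          (∀ k : ℤ, i < k → k < j → y k = 0) → a (j - i - 1).toNat = 1) :
    ∃ x : ℤ → Fin 2, (∀ i : ℤ, x (i + n) = x i) ∧ (∀ i, ∃ k, D a x i k) ∧ phi a x = y := by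
  have hyp : ∀ i : ℤ, (y (i + n) = 1) = (y i = 1) := fun i => by rw [hy]
  have hz : ∀ i, y i ≠ 1 → y i = 0 := fun i hi => by omega
  choose I hI1 hI2 hI3 using exists_last (P := fun i => y i = 1) hn hyp hex
  have Iuniq : ∀ m i, y i = 1 → i ≤ m → (∀ k, i < k → k ≤ m → y k ≠ 1) → I m = i := by
    intro m i h1 h2 h3
    rcases lt_trichotomy (I m) i with hl | hl | hl
    · exact absurd h1 (hI3 m i hl h2)
    · exact hl
    · exact absurd (hI1 m) (h3 _ hl (hI2 m))
  have Iper : ∀ m, I (m + n) = I m + n := by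
    intro m
    apply Iuniq
    · rw [hy]; exact hI1 m
    · have := hI2 m; omega
    · intro k hk hk2 h1
      refine hI3 m (k - n) (by omega) (by omega) ?_
      rw [← hy]
      simpa using h1
  let x : ℤ → Fin 2 := fun m => if y (m + 1) = 1 then 0 else a (m - I m).toNat
  have hx : ∀ m, x m = if y (m + 1) = 1 then 0 else a (m - I m).toNat := fun m => rfl
  clear_value x
  -- blocks
  have blk : ∀ m, ∃ k : ℕ, D a x (I m) k ∧ m ≤ I m + k ∧ y (I m + k + 1) = 1 := by
    intro m
    obtain ⟨j, j1, j2, j3⟩ := exists_first (P := fun i => y i = 1) hn hyp hex m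
    have b1 := hI2 m
    have b2 : ∀ k, I m < k → k < j → y k ≠ 1 := by
      intro k hk hk2
      by_cases hkm : k ≤ m
      · exact hI3 m k hk hkm
      · exact j3 k (by omega) hk2
    have hs := hS (I m) j (by omega) (hI1 m) j1 (fun k hk hk2 => hz k (b2 k hk hk2))
    refine ⟨(j - I m - 1).toNat, ⟨?_, ?_⟩, by omega, ?_⟩
    · intro l hl
      rw [hx, if_neg (b2 _ (by omega) (by omega)),
        Iuniq (I m + l) (I m) (hI1 m) (by omega) (fun k hk hk2 => b2 k hk (by omega))]
      congr 1
      omega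
    · rw [hx, if_pos, hs]
      · decide
      · rw [show I m + ((j - I m - 1).toNat : ℤ) + 1 = j by omega]; exact j1
    · rw [show I m + ((j - I m - 1).toNat : ℤ) + 1 = j by omega]; exact j1
  have blk2 : ∀ m, ∃ k : ℕ, D a x m k ∧ ∀ q, m < q → y q = 1 → m + k + 1 ≤ q := by
    intro m
    obtain ⟨k, h1, h2, h3⟩ := blk m
    have hq : ∀ q, m < q → y q = 1 → I m + k + 1 ≤ q := by
      intro q hq1 hq2
      by_contra hc
      have e : I q = q := Iuniq q q hq2 le_rfl (fun k hk hk2 => by omega)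
      -- position q lies inside the block of `I m`
      obtain ⟨j, j1, j2, j3⟩ := exists_first (P := fun i => y i = 1) hn hyp hex m
      have hb := hI2 m
      have hjq : j ≤ q := by
        by_contra hcc
        exact j3 q hq1 (not_le.1 hcc) hq2
      have b2 : ∀ k, I m < k → k < j → y k ≠ 1 := by
        intro k hk hk2
        by_cases hkm : k ≤ m
        · exact hI3 m k hk hkm
        · exact j3 k (by omega) hk2
      have hs := hS (I m) j (by omega) (hI1 m) j1 (fun k hk hk2 => hz k (b2 k hk hk2))
      have h4 := h1.1 (j - I m - 1).toNat (by omega)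
      rw [hx, if_pos, hs] at h4
      · exact absurd h4 (by decide)
      · rw [show I m + ((j - I m - 1).toNat : ℤ) + 1 = j by omega]; exact j1
    by_cases hm : I m = m
    · rw [hm] at h1 hq
      exact ⟨k, h1, hq⟩
    · have := hI2 m
      obtain ⟨k', h4, h5⟩ := D_nest' hP h1 (j := m) (by omega) h2
      refine ⟨k', h4, fun q hq1 hq2 => ?_⟩
      have := hq q hq1 hq2
      omega
  refine ⟨x, ?_, ?_, ?_⟩
  · intro m
    rw [hx, hx, Iper, show m + n + 1 = (m + 1) + n by ring, hy,
      show m + n - (I m + n) = m - I m by ring]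
  · intro m
    obtain ⟨k, h1, -⟩ := blk2 m
    exact ⟨k, h1⟩
  · funext m
    by_cases hm : y m = 1
    · rw [hm, phi_one]
      intro i k hi hD
      obtain ⟨k', h1, h2⟩ := blk2 i
      rw [D_uniq hD h1]
      exact h2 m hi hm
    · rw [hz m hm, phi_zero]
      intro hR
      obtain ⟨k, h1, h2, h3⟩ := blk m
      have hne : I m ≠ m := fun e => hm (e ▸ hI1 m)
      have := hI2 m
      have := hR (I m) k (by omega) h1
      omega

lemma per_finite {n : ℕ} (hn : 1 ≤ n) : {x : ℤ → Fin 2 | ∀ i : ℤ, x (i + n) = x i}.Finite := by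
  apply Set.Finite.of_injOn (f := fun x => fun t : Fin n => x ((t : ℕ) : ℤ)) (t := Set.univ)
    (fun _ _ => Set.mem_univ _) _ Set.finite_univ
  intro x hx x' hx' h
  funext i
  have h1 := per_int hx (i / n) (i % n)
  have h2 := per_int hx' (i / n) (i % n)
  have h3 : i % n + i / n * n = i := by
    rw [mul_comm]; exact Int.emod_add_mul_ediv i n
  rw [h3] at h1 h2
  have hnn := Int.emod_nonneg i (b := n) (by omega)
  have hlt := Int.emod_lt_of_pos i (b := n) (by omega)
  have := congrFun h ⟨(i % n).toNat, by omega⟩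
  simp only [Int.toNat_of_nonneg hnn] at this
  rw [h1, h2, this]

/-! Parry condition for the β-expansion. -/

lemma scaled_succ {β : ℝ} (hβ : 1 < β) (n : ℕ) :
    β ^ (n + 1) * betaRem β (n + 1) =
      β * (β ^ n * betaRem β n) - (if 1 ≤ β * (β ^ n * betaRem β n) then 1 else 0) := by
  have hb : β ≠ 0 := by linarith
  have hpos : 0 < β ^ (n + 1) := by positivity
  have hiff : β⁻¹ ^ (n + 1) ≤ betaRem β n ↔ 1 ≤ β * (β ^ n * betaRem β n) := by
    rw [inv_pow, inv_le_iff_one_le_mul₀ hpos]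
    rw [show betaRem β n * β ^ (n + 1) = β * (β ^ n * betaRem β n) by ring]
  rw [betaRem]
  simp only [hiff]
  split_ifs
  · rw [mul_sub, inv_pow, mul_inv_cancel₀ hpos.ne']; ring
  · ring

lemma digit_iff {β : ℝ} (hβ : 1 < β) (n : ℕ) :
    betaDigit β n = if 1 ≤ β * (β ^ n * betaRem β n) then 1 else 0 := by
  have hpos : 0 < β ^ (n + 1) := by positivity
  have hiff : β⁻¹ ^ (n + 1) ≤ betaRem β n ↔ 1 ≤ β * (β ^ n * betaRem β n) := by
    rw [inv_pow, inv_le_iff_one_le_mul₀ hpos]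
    rw [show betaRem β n * β ^ (n + 1) = β * (β ^ n * betaRem β n) by ring]
  unfold betaDigit
  simp only [hiff]

lemma scaled_le {β : ℝ} (hβ : 1 < β) (hβ2 : β ≤ 2) (n : ℕ) : β ^ n * betaRem β n ≤ 1 := by
  induction n with
  | zero => simp [betaRem]
  | succ n ih =>
    rw [scaled_succ hβ]
    split_ifs with h
    · nlinarith
    · linarith

lemma parry {β : ℝ} (hβ : 1 < β) (hβ2 : β ≤ 2) (h : ¬ EvPeriodic (betaDigit β)) :
    Parry (betaDigit β) := by
  intro p hp
  have hex : ∃ r, betaDigit β (p + r) ≠ betaDigit β r := by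
    by_contra! hc
    exact h ⟨p, hp, 0, fun n _ => by rw [add_comm]; exact hc n⟩
  classical
  have hmin : ∀ k < Nat.find hex, betaDigit β (p + k) = betaDigit β k := by
    intro k hk
    by_contra hc
    exact Nat.find_min hex hk hc
  have hspec := Nat.find_spec hex
  generalize Nat.find hex = r at hmin hspec
  have key : ∀ k ≤ r, β ^ (p + k) * betaRem β (p + k) ≤ β ^ k * betaRem β k := by
    intro k
    induction k with
    | zero => intro _; simpa [betaRem] using scaled_le hβ hβ2 p
    | succ k ih =>
      intro hk
      have i1 := ih (by omega)
      have i2 := hmin k (by omega)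
      rw [digit_iff hβ, digit_iff hβ] at i2
      rw [← add_assoc, scaled_succ hβ, scaled_succ hβ]
      have i3 : β * (β ^ (p + k) * betaRem β (p + k)) ≤ β * (β ^ k * betaRem β k) :=
        mul_le_mul_of_nonneg_left i1 (by linarith)
      split_ifs at i2 ⊢ <;> first | linarith | exact absurd i2 (by decide)
  refine ⟨r, hmin, ?_⟩
  have i1 := key r le_rfl
  have i3 : β * (β ^ (p + r) * betaRem β (p + r)) ≤ β * (β ^ r * betaRem β r) :=
    mul_le_mul_of_nonneg_left i1 (by linarith)
  rw [digit_iff hβ, digit_iff hβ] at hspec ⊢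
  split_ifs at hspec ⊢ with c1 c2 c2
  · exact absurd rfl hspec
  · linarith
  · decide
  · exact absurd rfl hspec

lemma S_infinite {β : ℝ} (h : ¬ EvPeriodic (betaDigit β)) : ¬ (assocS β).Finite := by
  intro hf
  obtain ⟨N, hN⟩ := hf.bddAbove
  have hz : ∀ m, N < m → betaDigit β m = 0 := by
    intro m hm
    by_contra hc
    have h1 : betaDigit β m = 1 := by omega
    have : m ≤ N := hN h1
    omega
  exact h ⟨1, one_pos, N + 1, fun m hm => by rw [hz _ (by omega), hz _ (by omega)]⟩

end PCount

open PCount in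
/-- If `β ∈ (1,2]` and `X_β` is not sofic (`1_β` not eventually
periodic), then for `X(S) = ASS(X_β)` and every `n ≥ 1`,
`|P_n(X(S))| = |P_n(X_β)| + 1`. -/
theorem pcount_assoc_sgap_eq_pcount_beta_add_one
    (β : ℝ) (hβ1 : 1 < β) (hβ2 : β ≤ 2)
    (h : ¬ EvPeriodic (betaDigit β)) :
    ∀ n : ℕ, 1 ≤ n → pcount (SGap (assocS β)) n = pcount (betaShift β) n + 1 := by
  intro n hn
  have hP := parry hβ1 hβ2 h
  have hSinf := S_infinite h
  have hG : ∀ x ∈ perPts (betaShift β) n,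
      (∀ i : ℤ, x (i + n) = x i) ∧ ∀ i, ∃ k, D (betaDigit β) x i k := by
    rintro x ⟨hx, hp⟩
    rw [per_iff] at hp
    refine ⟨hp, fun i => ?_⟩
    rcases hx i with he | ⟨k, hk⟩
    · exfalso
      refine h ⟨n, hn, 0, fun m _ => ?_⟩
      rw [← he]
      show x (i + ((m + n : ℕ) : ℤ)) = x (i + m)
      rw [← hp (i + m)]
      congr 1
      push_cast
      ring
    · exact ⟨k, hk⟩
  have hfin : (perPts (SGap (assocS β)) n).Finite :=
    (per_finite hn).subset (fun x hx => (per_iff n x).1 hx.2)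
  have h0 : (fun _ => 0 : ℤ → Fin 2) ∈ perPts (SGap (assocS β)) n := by
    refine ⟨⟨?_, fun hf => absurd hf hSinf⟩, ?_⟩
    · intro i j _ h1
      exact absurd h1 (by simp)
    · rw [per_iff]
      intro i
      rfl
  have hbij : Set.BijOn (phi (betaDigit β)) (perPts (betaShift β) n)
      (perPts (SGap (assocS β)) n \ {fun _ => 0}) := by
    refine ⟨?_, ?_, ?_⟩
    · intro x hx
      obtain ⟨hp, hD⟩ := hG x hx
      refine ⟨⟨⟨?_, fun hf => absurd hf hSinf⟩, ?_⟩, ?_⟩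
      · intro i j hij h1 h2 h3
        rw [phi_one] at h1 h2
        obtain ⟨k, hk⟩ := hD i
        have hj := R_gap hk h2 hij
        have hnx := R_next hP h1 hk
        have hjj : j = i + k + 1 := by
          by_contra hc
          exact (phi_zero.1 (h3 (i + k + 1) (by omega) (by omega))) hnx
        have : (j - i - 1).toNat = k := by omega
        rw [this]
        exact (fin2_lt hk.2).2
      · rw [per_iff]
        intro i
        have e := R_per (a := betaDigit β) hp i
        by_cases hr : R (betaDigit β) x i
        · rw [phi_one.2 hr, phi_one.2 (e.symm ▸ hr)]
        · rw [phi_zero.2 hr, phi_zero.2 (e.symm ▸ hr)]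
      · intro he
        obtain ⟨m, hm⟩ := R_exists hP hn hp hD
        rw [← phi_one, show phi (betaDigit β) x = fun _ => 0 from he] at hm
        exact absurd hm (by simp)
    · intro x hx x' hx' he
      obtain ⟨hp, hD⟩ := hG x hx
      obtain ⟨hp', hD'⟩ := hG x' hx'
      exact phi_inj hP hn hp hp' hD hD' he
    · rintro y ⟨⟨⟨hy1, -⟩, hy2⟩, hy3⟩
      rw [per_iff] at hy2
      have hex : ∃ i, y i = 1 := by
        by_contra! hc
        apply hy3
        show y = fun _ => 0
        funext i
        have := hc i
        omega
      obtain ⟨x, x1, x2, x3⟩ := phi_surj hP hn hy2 hex hy1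
      refine ⟨x, ⟨fun i => ?_, (per_iff n x).2 x1⟩, x3⟩
      obtain ⟨k, hk⟩ := x2 i
      exact Or.inr ⟨k, hk⟩
  unfold pcount
  rw [← Set.ncard_sdiff_singleton_add_one h0 hfin, ← hbij.image_eq,
    Set.InjOn.ncard_image hbij.injOn]
end
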